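/- arXiv:1711.02337 — 2 statements merged into one kernel-verified Lean document; each statement's English description precedes it below -/
import Mathlib

section
/- For all positive integers n and k, the following identity holds in ℚ(q): Σ over all tuples (D_1 ≤ D_2 ≤ ⋯ ≤ D_k) ∈ Dyck^k_{2n} of Π_{i=1}^k ( Π_{p∈V(D_i)} q^{2ht(p)+1} · Π_{p∈D_i} 1/(1−q^{2ht(p)+1}) ) · Π_{j=1}^{k−1} Π_{p∈D_j∩D_{j+1}} (1 − q^{−(2ht(p)+1)}) equals q^{k(k−1)(6n+8k−1)/6} times Σ over all tuples (D_1 < D_2 < ⋯ < D_k) ∈ Dyck^k_{2n} of Π_{i=1}^k ( Π_{p∈V(D_i)} q^{2ht(p)+1} · Π_{p∈D_i} 1/(1−q^{2ht(p)+1}) ), where ht(p) denotes the height (y-coordinate) of the lattice point p and V(D) is the set of valleys of D. -/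
open Finset

attribute [local instance 10] Classical.propDecidable

noncomputable section

namespace Paper

/-! ### Words and permutation statistics (all words are 1-based). -/

/-- The word (one-line notation, 1-based) of a permutation of `{1, …, N}`:
`word π i = π(i)` for `1 ≤ i ≤ N`, and `0` otherwise. -/
def word {N : ℕ} (π : Equiv.Perm (Fin N)) (i : ℕ) : ℕ :=
  if h : 1 ≤ i ∧ i ≤ N then (π ⟨i - 1, by omega⟩ : ℕ) + 1 else 0

/-- The major index of a word of length `N`: the sum of the descents. -/
def majW (N : ℕ) (w : ℕ → ℕ) : ℕ :=
  ∑ i ∈ Finset.Icc 1 (N - 1), if w (i + 1) < w i then i else 0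

/-- The number of inversions of a word of length `N`. -/
def invW (N : ℕ) (w : ℕ → ℕ) : ℕ :=
  (((Finset.Icc 1 N) ×ˢ (Finset.Icc 1 N)).filter
    fun p => p.1 < p.2 ∧ w p.2 < w p.1).card

/-- The number of descents of a word of length `m`. -/
def desW (m : ℕ) (w : ℕ → ℕ) : ℕ :=
  ((Finset.Icc 1 (m - 1)).filter fun i => w (i + 1) < w i).card

/-- The number of ascents of a word of length `m`. -/
def ascW (m : ℕ) (w : ℕ → ℕ) : ℕ :=
  ((Finset.Icc 1 (m - 1)).filter fun i => w i < w (i + 1)).card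

/-- The number of non-descents of a word of length `m`. -/
def ndesW (m : ℕ) (w : ℕ → ℕ) : ℕ :=
  ((Finset.Icc 1 m).filter fun i => i = m ∨ w i < w (i + 1)).card

/-- The number of non-ascents of a word of length `m`. -/
def nascW (m : ℕ) (w : ℕ → ℕ) : ℕ :=
  ((Finset.Icc 1 m).filter fun i => i = m ∨ ¬ w i < w (i + 1)).card

/-- `π_e = π₂π₄⋯`, the subword of even-position entries, as a 1-based word. -/
def evenWord {N : ℕ} (π : Equiv.Perm (Fin N)) (j : ℕ) : ℕ := word π (2 * j)

/-- `π_o = π₁π₃⋯`, the subword of odd-position entries, as a 1-based word. -/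
def oddWord {N : ℕ} (π : Equiv.Perm (Fin N)) (j : ℕ) : ℕ := word π (2 * j - 1)

/-- A word of length `N` is alternating: `w₁ < w₂ > w₃ < w₄ > ⋯`. -/
def IsAltW (N : ℕ) (w : ℕ → ℕ) : Prop :=
  ∀ i ∈ Finset.Icc 1 (N - 1), (i % 2 = 1 → w i < w (i + 1)) ∧ (i % 2 = 0 → w (i + 1) < w i)

/-- A word of length `N` is reverse alternating: `w₁ > w₂ < w₃ > w₄ < ⋯`. -/
def IsRaltW (N : ℕ) (w : ℕ → ℕ) : Prop :=
  ∀ i ∈ Finset.Icc 1 (N - 1), (i % 2 = 1 → w (i + 1) < w i) ∧ (i % 2 = 0 → w i < w (i + 1))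

/-- `Alt_N`, the set of alternating permutations of `{1, …, N}`. -/
def altPerms (N : ℕ) : Finset (Equiv.Perm (Fin N)) :=
  Finset.univ.filter fun π => IsAltW N (word π)

/-- `Ralt_N`, the set of reverse alternating permutations of `{1, …, N}`. -/
def raltPerms (N : ℕ) : Finset (Equiv.Perm (Fin N)) :=
  Finset.univ.filter fun π => IsRaltW N (word π)

/-- `κ_N = (1)(2,3)(4,5)⋯`, acting on the 1-based values `{1, …, N}`. -/
def kappaNat (N j : ℕ) : ℕ :=
  if j % 2 = 0 ∧ 2 ≤ j ∧ j + 1 ≤ N then j + 1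
  else if j % 2 = 1 ∧ 3 ≤ j ∧ j ≤ N then j - 1
  else j

/-- `η_N = (1,2)(3,4)⋯`, acting on the 1-based values `{1, …, N}`. -/
def etaNat (N j : ℕ) : ℕ :=
  if j % 2 = 1 ∧ j + 1 ≤ N then j + 1
  else if j % 2 = 0 ∧ 2 ≤ j ∧ j ≤ N then j - 1
  else j

/-- `maj(π⁻¹)`. -/
def majInv (N : ℕ) (π : Equiv.Perm (Fin N)) : ℕ := majW N (word π.symm)

/-- `maj(κ_N π⁻¹)`. -/
def majKappaInv (N : ℕ) (π : Equiv.Perm (Fin N)) : ℕ :=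
  majW N fun i => kappaNat N (word π.symm i)

/-- `maj(η_N π⁻¹)`. -/
def majEtaInv (N : ℕ) (π : Equiv.Perm (Fin N)) : ℕ :=
  majW N fun i => etaNat N (word π.symm i)

/-- The reversal permutation `i ↦ N + 1 - i` of `Fin N`. -/
def revPerm (N : ℕ) : Equiv.Perm (Fin N) :=
  ⟨Fin.rev, Fin.rev, fun i => Fin.rev_rev i, fun i => Fin.rev_rev i⟩

/-- `φ(π)ᵢ = (N+1) - π_{N+1-i}`. -/
def phiMap {N : ℕ} (π : Equiv.Perm (Fin N)) : Equiv.Perm (Fin N) :=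
  ((revPerm N).trans π).trans (revPerm N)

/-! ### Lattice paths.

A path with `L` unit steps is encoded by `s : Fin L → Bool` (`true` = up-step `(1,1)`,
`false` = down-step `(1,-1)`). -/

/-- The vertical displacement of the `j`-th step. -/
def stepVal {L : ℕ} (s : Fin L → Bool) (j : ℕ) : ℤ :=
  if h : j < L then (if s ⟨j, h⟩ then 1 else -1) else 0

/-- The height of the path after `i` steps. -/
def pht {L : ℕ} (s : Fin L → Bool) (i : ℕ) : ℤ := ∑ j ∈ Finset.range i, stepVal s j

/-- A Dyck path: stays (weakly) above the `x`-axis and ends at height `0`. -/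
def IsDyck {L : ℕ} (s : Fin L → Bool) : Prop :=
  (∀ i ∈ Finset.range (L + 1), 0 ≤ pht s i) ∧ pht s L = 0

/-- The Dyck paths with `L` steps. -/
def dyckPaths (L : ℕ) : Finset (Fin L → Bool) := Finset.univ.filter fun s => IsDyck s

/-- The (indices of the) valleys of a path: a down-step followed by an up-step. -/
def valleys {L : ℕ} (s : Fin L → Bool) : Finset ℕ :=
  (Finset.Icc 1 (L - 1)).filter fun i => stepVal s (i - 1) = -1 ∧ stepVal s i = 1

/-- The (indices of the) peaks of a path: an up-step followed by a down-step. -/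
def peaks {L : ℕ} (s : Fin L → Bool) : Finset ℕ :=
  (Finset.Icc 1 (L - 1)).filter fun i => stepVal s (i - 1) = 1 ∧ stepVal s i = -1

/-- The (indices of the) high peaks of a path: peaks of height at least `2`. -/
def highPeaks {L : ℕ} (s : Fin L → Bool) : Finset ℕ :=
  (peaks s).filter fun i => 2 ≤ pht s i

/-- The height over abscissa `x` of a path starting at `(-m, 0)`. -/
def aht (m : ℕ) {L : ℕ} (s : Fin L → Bool) (x : ℤ) : ℤ := pht s (x + m).toNat

/-- `D₁ < D₂`, for `D₁` starting at `(-m₁,0)` and `D₂` at `(-m₂,0)`, `m₁ ≤ m₂`: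
strictly below on the common range of abscissas. -/
def PathLT (m₁ m₂ : ℕ) {L₁ L₂ : ℕ} (s₁ : Fin L₁ → Bool) (s₂ : Fin L₂ → Bool) : Prop :=
  ∀ x ∈ Finset.Icc (-(m₁ : ℤ)) (m₁ : ℤ), aht m₁ s₁ x < aht m₂ s₂ x

/-- `D₁ ≤ D₂`: weakly below, sharing no step. -/
def PathLE (m₁ m₂ : ℕ) {L₁ L₂ : ℕ} (s₁ : Fin L₁ → Bool) (s₂ : Fin L₂ → Bool) : Prop :=
  (∀ x ∈ Finset.Icc (-(m₁ : ℤ)) (m₁ : ℤ), aht m₁ s₁ x ≤ aht m₂ s₂ x) ∧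
    ∀ x ∈ Finset.Icc (-(m₁ : ℤ)) ((m₁ : ℤ) - 1),
      ¬(aht m₁ s₁ x = aht m₂ s₂ x ∧ aht m₁ s₁ (x + 1) = aht m₂ s₂ (x + 1))

/-- The abscissas of the common lattice points of two paths. -/
def interPts (m₁ m₂ : ℕ) {L₁ L₂ : ℕ} (s₁ : Fin L₁ → Bool) (s₂ : Fin L₂ → Bool) : Finset ℤ :=
  (Finset.Icc (-(m₁ : ℤ)) (m₁ : ℤ)).filter fun x => aht m₁ s₁ x = aht m₂ s₂ x

/-- `Dyck^k_{2n}`: tuples `(D₁, …, D_k)` with `D_i ∈ Dyck((-n-2i+2,0) → (n+2i-2,0))`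
(0-based: `D_i` has half-length `n + 2i`). -/
abbrev DyckTuple (n k : ℕ) := ∀ i : Fin k, Fin (2 * (n + 2 * (i : ℕ))) → Bool

/-- The tuples `(D₁ ≤ D₂ ≤ ⋯ ≤ D_k) ∈ Dyck^k_{2n}`. -/
def weakTuples (n k : ℕ) : Finset (DyckTuple n k) :=
  Finset.univ.filter fun D =>
    (∀ i : Fin k, IsDyck (D i)) ∧
      ∀ (i : ℕ) (h : i + 1 < k),
        PathLE (n + 2 * i) (n + 2 * (i + 1)) (D ⟨i, by omega⟩) (D ⟨i + 1, h⟩)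

/-- The tuples `(D₁ < D₂ < ⋯ < D_k) ∈ Dyck^k_{2n}`. -/
def strictTuples (n k : ℕ) : Finset (DyckTuple n k) :=
  Finset.univ.filter fun D =>
    (∀ i : Fin k, IsDyck (D i)) ∧
      ∀ (i : ℕ) (h : i + 1 < k),
        PathLT (n + 2 * i) (n + 2 * (i + 1)) (D ⟨i, by omega⟩) (D ⟨i + 1, h⟩)

/-- The lattice points of a path starting at `(-m, 0)`, as a finite subset of `ℤ × ℤ`. -/
def pathPoints (m : ℕ) {L : ℕ} (s : Fin L → Bool) : Finset (ℤ × ℤ) :=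
  (Finset.range (L + 1)).image fun t : ℕ => (-(m : ℤ) + (t : ℤ), pht s t)

/-- The non-valley lattice points of a path starting at `(-m, 0)`. -/
def nonValleyPoints (m : ℕ) {L : ℕ} (s : Fin L → Bool) : Finset (ℤ × ℤ) :=
  ((Finset.range (L + 1)).filter fun t => t ∉ valleys s).image
    fun t : ℕ => (-(m : ℤ) + (t : ℤ), pht s t)

section Weights

variable {F : Type*} [Field F]

/-- The `i`-th lattice point (in `ℤ × ℕ`) of a path starting at `(a, 0)`. -/
def ptOf (a : ℤ) {L : ℕ} (s : Fin L → Bool) (i : ℕ) : ℤ × ℕ := (a + i, (pht s i).toNat)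

/-- `wt_V(D) = ∏_{p ∈ D} wt(p) · ∏_{p ∈ V(D)} w̃t(p)` for a path starting at `(a, 0)`. -/
def wtVal (wt wte : ℤ × ℕ → F) (a : ℤ) {L : ℕ} (s : Fin L → Bool) : F :=
  (∏ i ∈ Finset.range (L + 1), wt (ptOf a s i)) * ∏ i ∈ valleys s, wte (ptOf a s i)

/-- `wt_HP(D) = ∏_{p ∈ D} wt(p) · ∏_{p ∈ HP(D)} w̃t(p)` for a path starting at `(a, 0)`. -/
def wtHigh (wt wte : ℤ × ℕ → F) (a : ℤ) {L : ℕ} (s : Fin L → Bool) : F :=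
  (∏ i ∈ Finset.range (L + 1), wt (ptOf a s i)) * ∏ i ∈ highPeaks s, wte (ptOf a s i)

/-- `∏_{p ∈ D₁ ∩ D₂} f(p)`, for `D₁` starting at `(-m₁,0)` and `D₂` at `(-m₂,0)`. -/
def interProd (f : ℤ × ℕ → F) (m₁ m₂ : ℕ) {L₁ L₂ : ℕ}
    (s₁ : Fin L₁ → Bool) (s₂ : Fin L₂ → Bool) : F :=
  ∏ x ∈ interPts m₁ m₂ s₁ s₂, f (x, (aht m₁ s₁ x).toNat)

/-- The sum over `(D₁ ≤ ⋯ ≤ D_k) ∈ Dyck^k_{2n}` of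
`wt_V(D₁)⋯wt_V(D_k) ∏_{i=1}^{k-1} ∏_{p ∈ D_i ∩ D_{i+1}} (1 - w̃t(p)⁻¹)`. -/
def weakSum (wt wte : ℤ × ℕ → F) (n k : ℕ) : F :=
  ∑ D ∈ weakTuples n k,
    (∏ i : Fin k, wtVal wt wte (-(n : ℤ) - 2 * (i : ℕ)) (D i)) *
      ∏ j : Fin (k - 1),
        interProd (fun p => 1 - (wte p)⁻¹) (n + 2 * (j : ℕ)) (n + 2 * ((j : ℕ) + 1))
          (D ⟨(j : ℕ), by have := j.isLt; omega⟩)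
          (D ⟨(j : ℕ) + 1, by have := j.isLt; omega⟩)

/-- The sum over `(D₁ < ⋯ < D_k) ∈ Dyck^k_{2n}` of `wt_V(D₁)⋯wt_V(D_k)`. -/
def strictSum (wt wte : ℤ × ℕ → F) (n k : ℕ) : F :=
  ∑ D ∈ strictTuples n k, ∏ i : Fin k, wtVal wt wte (-(n : ℤ) - 2 * (i : ℕ)) (D i)

end Weights

/-! ### Schröder paths.

A path with `L` steps is encoded by `st : Fin L → Fin 3`
(`0` = up-step `(1,1)`, `1` = down-step `(1,-1)`, `2` = horizontal step `(2,0)`). -/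

/-- The horizontal displacement of the `j`-th step. -/
def stepX {L : ℕ} (st : Fin L → Fin 3) (j : ℕ) : ℕ :=
  if h : j < L then (if st ⟨j, h⟩ = 2 then 2 else 1) else 0

/-- The vertical displacement of the `j`-th step. -/
def stepY {L : ℕ} (st : Fin L → Fin 3) (j : ℕ) : ℤ :=
  if h : j < L then (if st ⟨j, h⟩ = 0 then 1 else if st ⟨j, h⟩ = 1 then -1 else 0) else 0

/-- The horizontal position (relative to the start) after `j` steps. -/
def xpos {L : ℕ} (st : Fin L → Fin 3) (j : ℕ) : ℕ := ∑ t ∈ Finset.range j, stepX st t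

/-- The height after `j` steps. -/
def ypos {L : ℕ} (st : Fin L → Fin 3) (j : ℕ) : ℤ := ∑ t ∈ Finset.range j, stepY st t

/-- A (little) Schröder path of horizontal span `2m`: nonnegative heights, ends at
height `0`, and no horizontal step on the `x`-axis. -/
def IsSch (m : ℕ) {L : ℕ} (st : Fin L → Fin 3) : Prop :=
  xpos st L = 2 * m ∧ (∀ j ∈ Finset.range (L + 1), 0 ≤ ypos st j) ∧ ypos st L = 0 ∧
    ∀ j ∈ Finset.range L, stepX st j = 2 → ypos st j ≠ 0

/-- The height of a Schröder path over the relative abscissa `x` (midpoints of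
horizontal steps get the height of that horizontal step). -/
def schHeight {L : ℕ} (st : Fin L → Fin 3) (x : ℕ) : ℤ :=
  ∑ t ∈ Finset.range L, if xpos st (t + 1) ≤ x then stepY st t else 0

/-- The relative abscissa `x` is the midpoint of a horizontal step. -/
def IsHMid {L : ℕ} (st : Fin L → Fin 3) (x : ℕ) : Prop :=
  ∃ j ∈ Finset.range L, stepX st j = 2 ∧ xpos st j + 1 = x

/-- The number of horizontal steps of a Schröder path. -/
def hsCount {L : ℕ} (st : Fin L → Fin 3) : ℕ :=
  ((Finset.range L).filter fun j => stepX st j = 2).card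

/-- `wt_Sch(c, S) = c^{hs(S)} ∏_{p ∈ S} wt(p)` for a Schröder path starting at `(a,0)`. -/
def wtSch {F : Type*} [Field F] (wt : ℤ × ℕ → F) (c : F) (a : ℤ) {L : ℕ}
    (st : Fin L → Fin 3) : F :=
  c ^ hsCount st * ∏ j ∈ Finset.range (L + 1), wt (a + xpos st j, (ypos st j).toNat)

/-- `φ_V(S) = D`: the Dyck path `D` (with `L'` steps) is obtained from the Schröder
path `S` by replacing each horizontal step by a down-step followed by an up-step. -/
def PhiVEq {L L' : ℕ} (st : Fin L → Fin 3) (s : Fin L' → Bool) : Prop :=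
  ∀ x ∈ Finset.range (L' + 1),
    pht s x = schHeight st x - (if IsHMid st x then 1 else 0)

/-- `φ_HP(S) = D`: the Dyck path `D` is obtained from the Schröder path `S` by
replacing each horizontal step by an up-step followed by a down-step. -/
def PhiHPEq {L L' : ℕ} (st : Fin L → Fin 3) (s : Fin L' → Bool) : Prop :=
  ∀ x ∈ Finset.range (L' + 1),
    pht s x = schHeight st x + (if IsHMid st x then 1 else 0)

/-! ### Young diagrams, excited and pleasant diagrams, reverse plane partitions. -/

/-- The cells (1-based, matrix coordinates) of the staircase `δ_m = (m-1, m-2, …, 1)`. -/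
def deltaCells (m : ℕ) : Finset (ℕ × ℕ) :=
  ((Finset.Icc 1 m) ×ˢ (Finset.Icc 1 m)).filter fun c => c.1 + c.2 ≤ m

/-- An excited move inside the Young diagram `lam`. -/
def ExcitedStep (lam : Finset (ℕ × ℕ)) (D D' : Finset (ℕ × ℕ)) : Prop :=
  ∃ i j : ℕ, (i, j) ∈ D ∧ (i + 1, j) ∉ D ∧ (i, j + 1) ∉ D ∧ (i + 1, j + 1) ∉ D ∧
    (i + 1, j + 1) ∈ lam ∧ D' = insert (i + 1, j + 1) (D.erase (i, j))

/-- `D` is an excited diagram of `lam/mu`. -/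
def IsExcited (lam mu D : Finset (ℕ × ℕ)) : Prop :=
  Relation.ReflTransGen (ExcitedStep lam) mu D

/-- `P` is a pleasant diagram of `lam/mu`: a subset of `lam \ D` for an excited diagram `D`. -/
def IsPleasant (lam mu : Finset (ℕ × ℕ)) (P : Finset (ℕ × ℕ)) : Prop :=
  ∃ D, IsExcited lam mu D ∧ P ⊆ lam \ D

/-- `p(lam/mu)`, the number of pleasant diagrams of `lam/mu`. -/
def pleasantCount (lam mu : Finset (ℕ × ℕ)) : ℕ :=
  Set.ncard {P : Finset (ℕ × ℕ) | IsPleasant lam mu P}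

/-- A reverse plane partition on the skew shape `shape`: a filling by nonnegative
integers (vanishing off the shape) weakly increasing along rows and columns. -/
def IsRPP (shape : Finset (ℕ × ℕ)) (f : ℕ × ℕ → ℕ) : Prop :=
  (∀ c, c ∉ shape → f c = 0) ∧
    (∀ i j : ℕ, (i, j) ∈ shape → (i, j + 1) ∈ shape → f (i, j) ≤ f (i, j + 1)) ∧
    ∀ i j : ℕ, (i, j) ∈ shape → (i + 1, j) ∈ shape → f (i, j) ≤ f (i + 1, j)

/-- `∑_{π ∈ RPP(shape)} q^{|π|}` as a formal power series in `q`. -/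
def rppGF (shape : Finset (ℕ × ℕ)) : PowerSeries ℚ :=
  PowerSeries.mk fun N =>
    (Set.ncard {f : ℕ × ℕ → ℕ | IsRPP shape f ∧ ∑ c ∈ shape, f c = N} : ℚ)

/-- `(q; q)_m = ∏_{i=1}^m (1 - q^i)` as a formal power series. -/
def pochPS (m : ℕ) : PowerSeries ℚ :=
  ∏ i ∈ Finset.Icc 1 m, (1 - (PowerSeries.X : PowerSeries ℚ) ^ i)

/-- `E*_N(q) = ∑_{π ∈ Alt_N} q^{maj(κ_N π⁻¹)}` as a formal power series. -/
def EstarPS (N : ℕ) : PowerSeries ℚ :=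
  ∑ π ∈ altPerms N, (PowerSeries.X : PowerSeries ℚ) ^ majKappaInv N π

/-- `E*_m(q)/(q;q)_m` for `m ≥ 0`, and `0` for `m < 0`. -/
def EstarEntry (m : ℤ) : PowerSeries ℚ :=
  if m < 0 then 0 else EstarPS m.toNat * (pochPS m.toNat)⁻¹

/-- The Gaussian binomial coefficient `[N choose M]_q` as a formal power series. -/
def gaussPS (N M : ℕ) : PowerSeries ℚ :=
  pochPS N * (pochPS M * pochPS (N - M))⁻¹

/-! ### Elementary facts on heights, valleys and peaks -/

section Heights

variable {L : ℕ} (s : Fin L → Bool)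

theorem pht_zero : pht s 0 = 0 := by simp [pht]

theorem pht_succ (t : ℕ) : pht s (t + 1) = pht s t + stepVal s t := by
  simp [pht, Finset.sum_range_succ]

theorem stepVal_eq_or {t : ℕ} (ht : t < L) : stepVal s t = 1 ∨ stepVal s t = -1 := by
  unfold stepVal
  rw [dif_pos ht]
  split_ifs <;> simp

theorem pht_step {t : ℕ} (ht : t < L) :
    pht s (t + 1) = pht s t + 1 ∨ pht s (t + 1) = pht s t - 1 := by
  have h₁ := pht_succ s t
  have h₂ := stepVal_eq_or s ht
  omega

theorem pht_emod_two {t : ℕ} (ht : t ≤ L) : (pht s t - t) % 2 = 0 := by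
  induction t with
  | zero => simp [pht_zero]
  | succ t ih =>
    have h₁ := ih (by omega)
    have h₂ := pht_step s (t := t) (by omega)
    push_cast
    omega

theorem pht_le {t : ℕ} (ht : t ≤ L) : pht s t ≤ t := by
  induction t with
  | zero => simp [pht_zero]
  | succ t ih =>
    have h₁ := ih (by omega)
    have h₂ := pht_step s (t := t) (by omega)
    push_cast
    omega

theorem mem_valleys {t : ℕ} :
    t + 1 ∈ valleys s ↔ t + 1 < L ∧ stepVal s t = -1 ∧ stepVal s (t + 1) = 1 := by
  simp only [valleys, Finset.mem_filter, Finset.mem_Icc, Nat.add_sub_cancel]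
  omega

theorem zero_notMem_valleys : 0 ∉ valleys s := by simp [valleys]

theorem mem_peaks {t : ℕ} :
    t + 1 ∈ peaks s ↔ t + 1 < L ∧ stepVal s t = 1 ∧ stepVal s (t + 1) = -1 := by
  simp only [peaks, Finset.mem_filter, Finset.mem_Icc, Nat.add_sub_cancel]
  omega

theorem zero_notMem_peaks : 0 ∉ peaks s := by simp [peaks]

theorem mem_valleys_iff_pht {t : ℕ} :
    t + 1 ∈ valleys s ↔
      t + 1 < L ∧ pht s t = pht s (t + 1) + 1 ∧ pht s (t + 2) = pht s (t + 1) + 1 := by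
  rw [mem_valleys]
  have h₁ := pht_succ s t
  have h₂ : pht s (t + 2) = pht s (t + 1) + stepVal s (t + 1) := pht_succ s (t + 1)
  constructor <;> rintro ⟨h, h', h''⟩ <;> refine ⟨h, ?_, ?_⟩ <;> omega

theorem mem_peaks_iff_pht {t : ℕ} :
    t + 1 ∈ peaks s ↔
      t + 1 < L ∧ pht s t = pht s (t + 1) - 1 ∧ pht s (t + 2) = pht s (t + 1) - 1 := by
  rw [mem_peaks]
  have h₁ := pht_succ s t
  have h₂ : pht s (t + 2) = pht s (t + 1) + stepVal s (t + 1) := pht_succ s (t + 1)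
  constructor <;> rintro ⟨h, h', h''⟩ <;> refine ⟨h, ?_, ?_⟩ <;> omega

variable {s}

theorem le_of_mem_valleys {t : ℕ} (ht : t ∈ valleys s) : t ≤ L := by
  simp only [valleys, Finset.mem_filter, Finset.mem_Icc] at ht
  omega

theorem le_of_mem_peaks {t : ℕ} (ht : t ∈ peaks s) : t ≤ L := by
  simp only [peaks, Finset.mem_filter, Finset.mem_Icc] at ht
  omega

theorem succ_notMem_valleys {t : ℕ} (ht : t ∈ valleys s) : t + 1 ∉ valleys s := by
  intro h
  simp only [valleys, Finset.mem_filter, Finset.mem_Icc, Nat.add_sub_cancel] at ht h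
  omega

theorem succ_notMem_peaks {t : ℕ} (ht : t ∈ peaks s) : t + 1 ∉ peaks s := by
  intro h
  simp only [peaks, Finset.mem_filter, Finset.mem_Icc, Nat.add_sub_cancel] at ht h
  omega

/-- Reverse the two steps around each of the points with index in `H`. -/
def flipAt (s : Fin L → Bool) (H : Finset ℕ) (j : Fin L) : Bool :=
  if (j : ℕ) ∈ H ∨ (j : ℕ) + 1 ∈ H then !s j else s j

theorem flipAt_flipAt (s : Fin L → Bool) (H : Finset ℕ) : flipAt (flipAt s H) H = s := by
  funext j
  unfold flipAt
  split_ifs <;> simp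

theorem stepVal_flipAt (s : Fin L → Bool) (H : Finset ℕ) (t : ℕ) :
    stepVal (flipAt s H) t =
      if t ∈ H ∨ t + 1 ∈ H then -stepVal s t else stepVal s t := by
  unfold stepVal flipAt
  by_cases ht : t < L
  · simp only [ht, dif_pos]
    split_ifs <;> simp_all
  · simp [ht]

theorem subset_peaks_flipAt {H : Finset ℕ} (hH : H ⊆ valleys s) : H ⊆ peaks (flipAt s H) := by
  intro t ht
  have hv := hH ht
  cases t with
  | zero => exact absurd hv (zero_notMem_valleys s)
  | succ t =>
    rw [mem_valleys] at hv
    rw [mem_peaks, stepVal_flipAt, stepVal_flipAt]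
    simp only [ht, or_true, true_or, if_true]
    omega

theorem subset_valleys_flipAt {H : Finset ℕ} (hH : H ⊆ peaks s) :
    H ⊆ valleys (flipAt s H) := by
  intro t ht
  have hv := hH ht
  cases t with
  | zero => exact absurd hv (zero_notMem_peaks s)
  | succ t =>
    rw [mem_peaks] at hv
    rw [mem_valleys, stepVal_flipAt, stepVal_flipAt]
    simp only [ht, or_true, true_or, if_true]
    omega

theorem pht_flipAt_of_subset_valleys {H : Finset ℕ} (hH : H ⊆ valleys s) (t : ℕ) :
    pht (flipAt s H) t = pht s t + if t ∈ H then 2 else 0 := by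
  induction t with
  | zero =>
    have : 0 ∉ H := fun h => zero_notMem_valleys s (hH h)
    simp [pht_zero, this]
  | succ t ih =>
    rw [pht_succ, pht_succ, ih, stepVal_flipAt]
    by_cases h₁ : t ∈ H
    · have h₂ : t + 1 ∉ H := fun h => succ_notMem_valleys (hH h₁) (hH h)
      have h₃ : stepVal s t = 1 := by
        have := hH h₁
        simp only [valleys, Finset.mem_filter] at this
        exact this.2.2
      simp only [h₁, h₂, h₃, true_or, if_true, if_false]
      ring
    · by_cases h₂ : t + 1 ∈ H
      · have h₃ := ((mem_valleys s).1 (hH h₂)).2.1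
        simp only [h₁, h₂, h₃, or_true, if_true, if_false]
        ring
      · simp [h₁, h₂]

theorem pht_flipAt_of_subset_peaks {H : Finset ℕ} (hH : H ⊆ peaks s) (t : ℕ) :
    pht (flipAt s H) t = pht s t - if t ∈ H then 2 else 0 := by
  have h := pht_flipAt_of_subset_valleys (subset_valleys_flipAt hH) t
  rw [flipAt_flipAt] at h
  omega

end Heights

/-! ### Exchanging a path between two boundaries -/

section Exchange

/-- `f ≤ g` on `[a, b]` without a common step. -/
def WeakBelow (a b : ℕ) (f g : ℕ → ℤ) : Prop :=
  (∀ t, a ≤ t → t ≤ b → f t ≤ g t) ∧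
    ∀ t, a ≤ t → t < b → ¬(f t = g t ∧ f (t + 1) = g (t + 1))

/-- `f < g` on `[a, b]`. -/
def StrictBelow (a b : ℕ) (f g : ℕ → ℤ) : Prop := ∀ t, a ≤ t → t ≤ b → f t < g t

/-- `f` is a lattice path on `[a, b]` which stays above the axis, with `f t ≡ t` mod `2`. -/
structure IsBoundary (a b : ℕ) (f : ℕ → ℤ) : Prop where
  nonneg : ∀ t, a ≤ t → t ≤ b → 0 ≤ f t
  step : ∀ t, a ≤ t → t < b → f (t + 1) = f t + 1 ∨ f (t + 1) = f t - 1
  parity : ∀ t, a ≤ t → t ≤ b → (f t - t) % 2 = 0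

variable {L : ℕ} {l u : ℕ → ℤ} {s : Fin L → Bool} {H : Finset ℕ}

theorem IsDyck.nonneg (hs : IsDyck s) {t : ℕ} (ht : t ≤ L) : 0 ≤ pht s t :=
  hs.1 t (Finset.mem_range.2 (by omega))

theorem touch_subset_valleys (hL : 6 ≤ L) (hl : IsBoundary 2 (L - 2) l) (hl₀ : l 2 = 0)
    (hl₁ : l (L - 2) = 0) (h : WeakBelow 2 (L - 2) l (pht s)) :
    (Finset.Icc 2 (L - 2)).filter (fun t => l t = pht s t) ⊆ valleys s := by
  intro t ht
  simp only [Finset.mem_filter, Finset.mem_Icc] at ht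
  obtain ⟨⟨h₁, h₂⟩, h₃⟩ := ht
  obtain ⟨t, rfl⟩ : ∃ r, t = r + 1 := ⟨t - 1, by omega⟩
  have hlt : t + 1 < L - 2 := by
    by_contra hc
    obtain rfl : t = L - 3 := by omega
    have e : L - 3 + 1 = L - 2 := by omega
    have a₁ := hl.step (L - 3) (by omega) (by omega)
    have a₂ := hl.nonneg (L - 3) (by omega) (by omega)
    have a₃ := h.1 (L - 3) (by omega) (by omega)
    have a₄ := h.2 (L - 3) (by omega) (by omega)
    have a₅ := pht_step s (t := L - 3) (by omega)
    rw [e] at a₁ a₄ a₅ h₃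
    omega
  have hgt : 2 < t + 1 := by
    by_contra hc
    obtain rfl : t = 1 := by omega
    have a₁ := hl.step 2 (by omega) (by omega)
    have a₂ := hl.nonneg 3 (by omega) (by omega)
    have a₃ := h.1 3 (by omega) (by omega)
    have a₄ := h.2 2 (by omega) (by omega)
    have a₅ := pht_step s (t := 2) (by omega)
    simp only [Nat.reduceAdd] at *
    omega
  rw [mem_valleys_iff_pht]
  have a₁ := hl.step t (by omega) (by omega)
  have a₂ := hl.step (t + 1) (by omega) (by omega)
  have a₃ := h.1 t (by omega) (by omega)
  have a₄ := h.1 (t + 2) (by omega) (by omega)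
  have a₅ := h.2 t (by omega) (by omega)
  have a₆ := h.2 (t + 1) (by omega) (by omega)
  have a₇ := pht_step s (t := t) (by omega)
  have a₈ := pht_step s (t := t + 1) (by omega)
  simp only [add_assoc, Nat.reduceAdd] at *
  omega

theorem touch_subset_peaks (hL : 6 ≤ L) (hu : IsBoundary 0 L u) (hs : IsDyck s)
    (h : WeakBelow 0 L (pht s) u) :
    (Finset.range (L + 1)).filter (fun t => pht s t = u t) ⊆ peaks s := by
  intro t ht
  simp only [Finset.mem_filter, Finset.mem_range] at ht
  obtain ⟨h₁, h₃⟩ := ht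
  have hs₀ := pht_zero s
  have hs₁ := hs.2
  have hgt : t ≠ 0 := by
    rintro rfl
    have a₁ := hu.step 0 (by omega) (by omega)
    have a₂ := hu.nonneg 1 (by omega) (by omega)
    have a₄ := h.2 0 (by omega) (by omega)
    have a₅ := pht_step s (t := 0) (by omega)
    have a₆ := hs.nonneg (t := 1) (by omega)
    simp only [zero_add] at *
    omega
  obtain ⟨t, rfl⟩ : ∃ r, t = r + 1 := ⟨t - 1, by omega⟩
  have hlt : t + 1 < L := by
    by_contra hc
    obtain rfl : t = L - 1 := by omega
    have e : L - 1 + 1 = L := by omega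
    have a₁ := hu.step (L - 1) (by omega) (by omega)
    have a₂ := hu.nonneg (L - 1) (by omega) (by omega)
    have a₄ := h.2 (L - 1) (by omega) (by omega)
    have a₅ := pht_step s (t := L - 1) (by omega)
    have a₆ := hs.nonneg (t := L - 1) (by omega)
    rw [e] at a₁ a₄ a₅ h₃
    omega
  rw [mem_peaks_iff_pht]
  have a₁ := hu.step t (by omega) (by omega)
  have a₂ := hu.step (t + 1) (by omega) (by omega)
  have a₃ := h.1 t (by omega) (by omega)
  have a₄ := h.1 (t + 2) (by omega) (by omega)
  have a₅ := h.2 t (by omega) (by omega)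
  have a₆ := h.2 (t + 1) (by omega) (by omega)
  have a₇ := pht_step s (t := t) (by omega)
  have a₈ := pht_step s (t := t + 1) (by omega)
  simp only [add_assoc, Nat.reduceAdd] at *
  omega

theorem two_le_pht_of_mem_peaks (hL : 6 ≤ L) (hl : IsBoundary 2 (L - 2) l) (hs : IsDyck s)
    (h : StrictBelow 2 (L - 2) l (pht s)) {t : ℕ} (ht : t ∈ peaks s) : 2 ≤ pht s t := by
  cases t with
  | zero => exact absurd ht (zero_notMem_peaks s)
  | succ t =>
    rw [mem_peaks_iff_pht] at ht
    have a₁ := hs.nonneg (t := t) (by omega)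
    by_cases h₂ : 2 ≤ t ∧ t ≤ L - 2
    · have := hl.nonneg t h₂.1 h₂.2
      have := h t h₂.1 h₂.2
      omega
    · have := hl.nonneg (t + 2) (by omega) (by omega)
      have := h (t + 2) (by omega) (by omega)
      omega

/-- The pairs `(s, H)` of a path `s` between `l` and `u`, touching `l` only at points of `H`,
and a set `H` of valleys of `s`. -/
def lowerPairs (L : ℕ) (l u : ℕ → ℤ) : Finset (Σ _ : Fin L → Bool, Finset ℕ) :=
  (Finset.univ.filter fun s : Fin L → Bool =>
      IsDyck s ∧ WeakBelow 2 (L - 2) l (pht s) ∧ StrictBelow 0 L (pht s) u).sigma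
    fun s => (valleys s).powerset.filter fun H =>
      (Finset.Icc 2 (L - 2)).filter (fun t => l t = pht s t) ⊆ H

/-- The pairs `(s, H)` of a path `s` between `l` and `u`, touching `u` only at points of `H`,
and a set `H` of peaks of `s`. -/
def upperPairs (L : ℕ) (l u : ℕ → ℤ) : Finset (Σ _ : Fin L → Bool, Finset ℕ) :=
  (Finset.univ.filter fun s : Fin L → Bool =>
      IsDyck s ∧ StrictBelow 2 (L - 2) l (pht s) ∧ WeakBelow 0 L (pht s) u).sigma
    fun s => (peaks s).powerset.filter fun H =>
      (Finset.range (L + 1)).filter (fun t => pht s t = u t) ⊆ H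

theorem mem_lowerPairs : (⟨s, H⟩ : Σ _ : Fin L → Bool, Finset ℕ) ∈ lowerPairs L l u ↔
    (IsDyck s ∧ WeakBelow 2 (L - 2) l (pht s) ∧ StrictBelow 0 L (pht s) u) ∧
      H ⊆ valleys s ∧ ∀ t, 2 ≤ t → t ≤ L - 2 → l t = pht s t → t ∈ H := by
  simp [lowerPairs, Finset.subset_iff]

theorem mem_upperPairs : (⟨s, H⟩ : Σ _ : Fin L → Bool, Finset ℕ) ∈ upperPairs L l u ↔
    (IsDyck s ∧ StrictBelow 2 (L - 2) l (pht s) ∧ WeakBelow 0 L (pht s) u) ∧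
      H ⊆ peaks s ∧ ∀ t, t ≤ L → pht s t = u t → t ∈ H := by
  simp [upperPairs, Finset.subset_iff]

theorem flipAt_mem_upperPairs (hu : IsBoundary 0 L u)
    (h : (⟨s, H⟩ : Σ _ : Fin L → Bool, Finset ℕ) ∈ lowerPairs L l u) :
    (⟨flipAt s H, H⟩ : Σ _ : Fin L → Bool, Finset ℕ) ∈ upperPairs L l u := by
  rw [mem_lowerPairs] at h
  obtain ⟨⟨hs, hl', hu'⟩, hH, ht⟩ := h
  have hp := pht_flipAt_of_subset_valleys hH
  rw [mem_upperPairs]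
  refine ⟨⟨⟨fun i hi => ?_, ?_⟩, fun t h₁ h₂ => ?_, fun t h₁ h₂ => ?_, fun t h₁ h₂ => ?_⟩,
    subset_peaks_flipAt hH, fun t h₁ h₂ => ?_⟩
  · have := hs.1 i hi
    rw [hp]
    split_ifs <;> omega
  · have hL : L ∉ H := fun hc => by
      have := hH hc
      simp only [valleys, Finset.mem_filter, Finset.mem_Icc] at this
      omega
    simp [hp, hL, hs.2]
  · have a₁ := hl'.1 t h₁ h₂
    have a₂ := ht t h₁ h₂
    rw [hp]
    split_ifs with hc
    · omega
    · have : l t ≠ pht s t := fun e => hc (a₂ e)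
      omega
  · have a₁ := hu' t h₁ h₂
    have a₂ := hu.parity t h₁ h₂
    have a₃ := pht_emod_two s h₂
    rw [hp]
    split_ifs <;> omega
  · rintro ⟨e₁, e₂⟩
    have a₁ := hu' t h₁ (by omega)
    have a₂ := hu' (t + 1) (by omega) (by omega)
    rw [hp] at e₁ e₂
    split_ifs at e₁ e₂ with h₃ h₄
    · exact succ_notMem_valleys (hH h₃) (hH h₄)
    all_goals omega
  · have a₁ := hu' t (by omega) h₁
    rw [hp] at h₂
    split_ifs at h₂ with h₃
    · exact h₃
    · omega

theorem flipAt_mem_lowerPairs (hL : 6 ≤ L) (hl : IsBoundary 2 (L - 2) l)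
    (h : (⟨s, H⟩ : Σ _ : Fin L → Bool, Finset ℕ) ∈ upperPairs L l u) :
    (⟨flipAt s H, H⟩ : Σ _ : Fin L → Bool, Finset ℕ) ∈ lowerPairs L l u := by
  rw [mem_upperPairs] at h
  obtain ⟨⟨hs, hl', hu'⟩, hH, ht⟩ := h
  have hp := pht_flipAt_of_subset_peaks hH
  rw [mem_lowerPairs]
  refine ⟨⟨⟨fun i hi => ?_, ?_⟩, ⟨fun t h₁ h₂ => ?_, fun t h₁ h₂ => ?_⟩, fun t h₁ h₂ => ?_⟩,
    subset_valleys_flipAt hH, fun t h₁ h₂ h₃ => ?_⟩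
  · have := hs.1 i hi
    rw [hp]
    split_ifs with hc
    · have := two_le_pht_of_mem_peaks hL hl hs hl' (hH hc)
      omega
    · omega
  · have hL : L ∉ H := fun hc => by
      have := hH hc
      simp only [peaks, Finset.mem_filter, Finset.mem_Icc] at this
      omega
    simp [hp, hL, hs.2]
  · have a₁ := hl' t h₁ h₂
    have a₂ := hl.parity t h₁ h₂
    have a₃ := pht_emod_two s (t := t) (by omega)
    rw [hp]
    split_ifs <;> omega
  · rintro ⟨e₁, e₂⟩
    have a₁ := hl' t h₁ (by omega)
    have a₂ := hl' (t + 1) (by omega) (by omega)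
    rw [hp] at e₁ e₂
    split_ifs at e₁ e₂ with h₃ h₄
    · exact succ_notMem_peaks (hH h₃) (hH h₄)
    all_goals omega
  · have a₁ := hu'.1 t h₁ h₂
    have a₂ := ht t h₂
    rw [hp]
    split_ifs with hc
    · omega
    · have : pht s t ≠ u t := fun e => hc (a₂ e)
      omega
  · have a₁ := hl' t h₁ h₂
    rw [hp] at h₃
    split_ifs at h₃ with h₄
    · exact h₄
    · omega

variable {F : Type*} [Field F]

theorem sum_powerset_filter_superset (I V : Finset ℕ) (hI : I ⊆ V) (a : ℕ → F)
    (ha : ∀ t, a t ≠ 0) :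
    ∑ H ∈ V.powerset.filter (fun H => I ⊆ H), ∏ t ∈ H, (a t - 1) =
      (∏ t ∈ V, a t) * ∏ t ∈ I, (1 - (a t)⁻¹) := by
  have h₁ : ∀ H ∈ V.powerset, (if I ⊆ H then ∏ t ∈ H, (a t - 1) else 0) =
      (∏ t ∈ H, (a t - 1)) * ∏ t ∈ V \ H, (if t ∈ I then 0 else 1) := by
    intro H _
    split_ifs with h
    · rw [Finset.prod_eq_one (s := V \ H), mul_one]
      intro t ht
      rw [if_neg]
      exact fun hc => (Finset.mem_sdiff.1 ht).2 (h hc)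
    · obtain ⟨t, ht, ht'⟩ := Finset.not_subset.1 h
      rw [Finset.prod_eq_zero (f := fun t => if t ∈ I then (0 : F) else 1)
        (Finset.mem_sdiff.2 ⟨hI ht, ht'⟩) (if_pos ht), mul_zero]
  rw [Finset.sum_filter, Finset.sum_congr rfl h₁, ← Finset.prod_add]
  have h₂ : ∏ t ∈ I, (1 - (a t)⁻¹) = ∏ t ∈ V, if t ∈ I then 1 - (a t)⁻¹ else 1 := by
    rw [Finset.prod_ite_mem, Finset.inter_eq_right.2 hI]
  rw [h₂, ← Finset.prod_mul_distrib]
  refine Finset.prod_congr rfl fun t _ => ?_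
  have := ha t
  split_ifs
  · field_simp
    ring
  · ring

/-- The signed weight of a path `s` whose points in `H` have been deleted. -/
theorem prod_inv_mul_prod_sub_one (w : ℕ → F) (hw : ∀ t, 1 - w t ≠ 0) (N : ℕ)
    (hH : H ⊆ Finset.range N) :
    (∏ t ∈ Finset.range N, (1 - w t)⁻¹) * ∏ t ∈ H, (w t - 1) =
      ∏ t ∈ Finset.range N, if t ∈ H then -1 else (1 - w t)⁻¹ := by
  have h₂ : ∏ t ∈ H, (w t - 1) = ∏ t ∈ Finset.range N, if t ∈ H then w t - 1 else 1 := by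
    rw [Finset.prod_ite_mem, Finset.inter_eq_right.2 hH]
  rw [h₂, ← Finset.prod_mul_distrib]
  refine Finset.prod_congr rfl fun t _ => ?_
  have := hw t
  split_ifs
  · field_simp
    ring
  · ring

/-- The weight of a path with extra weights at a set `V` of its points. -/
def ptWeight (w : ℕ → F) (s : Fin L → Bool) (V : Finset ℕ) : F :=
  (∏ t ∈ Finset.range (L + 1), (1 - w (pht s t).toNat)⁻¹) * ∏ t ∈ V, w (pht s t).toNat

theorem ptWeight_mul_prod (w : ℕ → F) (hw₀ : ∀ h, w h ≠ 0) (hw₁ : ∀ h, 1 - w h ≠ 0)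
    (s : Fin L → Bool) {I V : Finset ℕ} (hI : I ⊆ V) (hV : ∀ t ∈ V, t ≤ L) :
    ptWeight w s V * ∏ t ∈ I, (1 - (w (pht s t).toNat)⁻¹) =
      ∑ H ∈ V.powerset.filter (fun H => I ⊆ H),
        ∏ t ∈ Finset.range (L + 1), if t ∈ H then -1 else (1 - w (pht s t).toNat)⁻¹ := by
  rw [ptWeight, mul_assoc, ← sum_powerset_filter_superset I V hI _ (fun t => hw₀ _),
    Finset.mul_sum]
  refine Finset.sum_congr rfl fun H hH => ?_
  refine prod_inv_mul_prod_sub_one (fun t => w (pht s t).toNat) (fun t => hw₁ _) _ ?_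
  intro t ht
  have := hV t (Finset.mem_powerset.1 (Finset.mem_filter.1 hH).1 ht)
  simp only [Finset.mem_range]
  omega

theorem sum_exchange (hL : 6 ≤ L) (hl : IsBoundary 2 (L - 2) l) (hl₀ : l 2 = 0)
    (hl₁ : l (L - 2) = 0) (hu : IsBoundary 0 L u) (w : ℕ → F) (hw₀ : ∀ h, w h ≠ 0)
    (hw₁ : ∀ h, 1 - w h ≠ 0) :
    ∑ s ∈ Finset.univ.filter (fun s : Fin L → Bool =>
        IsDyck s ∧ WeakBelow 2 (L - 2) l (pht s) ∧ StrictBelow 0 L (pht s) u),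
      ptWeight w s (valleys s) *
        ∏ t ∈ (Finset.Icc 2 (L - 2)).filter (fun t => l t = pht s t),
          (1 - (w (pht s t).toNat)⁻¹) =
    ∑ s ∈ Finset.univ.filter (fun s : Fin L → Bool =>
        IsDyck s ∧ StrictBelow 2 (L - 2) l (pht s) ∧ WeakBelow 0 L (pht s) u),
      ptWeight w s (peaks s) *
        ∏ t ∈ (Finset.range (L + 1)).filter (fun t => pht s t = u t),
          (1 - (w (pht s t).toNat)⁻¹) := by
  have e₁ := fun s (hs : s ∈ Finset.univ.filter (fun s : Fin L → Bool =>
      IsDyck s ∧ WeakBelow 2 (L - 2) l (pht s) ∧ StrictBelow 0 L (pht s) u)) =>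
    ptWeight_mul_prod w hw₀ hw₁ s
      (touch_subset_valleys hL hl hl₀ hl₁ (Finset.mem_filter.1 hs).2.2.1)
      (fun t => le_of_mem_valleys)
  have e₂ := fun s (hs : s ∈ Finset.univ.filter (fun s : Fin L → Bool =>
      IsDyck s ∧ StrictBelow 2 (L - 2) l (pht s) ∧ WeakBelow 0 L (pht s) u)) =>
    ptWeight_mul_prod w hw₀ hw₁ s
      (touch_subset_peaks hL hu (Finset.mem_filter.1 hs).2.1 (Finset.mem_filter.1 hs).2.2.2)
      (fun t => le_of_mem_peaks)
  rw [Finset.sum_congr rfl e₁, Finset.sum_congr rfl e₂, Finset.sum_sigma', Finset.sum_sigma']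
  refine Finset.sum_bij' (s := lowerPairs L l u) (t := upperPairs L l u)
    (fun p _ => ⟨flipAt p.1 p.2, p.2⟩) (fun p _ => ⟨flipAt p.1 p.2, p.2⟩)
    (fun p hp => flipAt_mem_upperPairs hu hp) (fun p hp => flipAt_mem_lowerPairs hL hl hp)
    (fun p _ => by simp [flipAt_flipAt]) (fun p _ => by simp [flipAt_flipAt]) ?_
  rintro ⟨s, H⟩ hp
  refine Finset.prod_congr rfl fun t _ => ?_
  have := pht_flipAt_of_subset_valleys (mem_lowerPairs.1 hp).2.1 t
  by_cases ht : t ∈ H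
  · simp [ht]
  · simp [ht, this]

end Exchange

/-! ### Comparing peaks and valleys -/

section PeaksValleys

variable {L : ℕ} {s : Fin L → Bool}

theorem sum_peaks_sub_sum_valleys (N : ℕ) (hN : N < L) :
    2 * ∑ i ∈ Finset.range (N + 1), ((if i ∈ peaks s then 2 * pht s i + 1 else 0) -
      if i ∈ valleys s then 2 * pht s i + 1 else 0) =
    2 * N + stepVal s 0 - (2 * pht s N + 1) * stepVal s N := by
  induction N with
  | zero => simp [zero_notMem_peaks, zero_notMem_valleys, pht_zero]
  | succ N ih =>
    rw [Finset.sum_range_succ, mul_add, ih (by omega), pht_succ]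
    simp only [mem_peaks, mem_valleys]
    push_cast
    rcases stepVal_eq_or s (t := N) (by omega) with h₁ | h₁ <;>
    rcases stepVal_eq_or s hN with h₂ | h₂ <;>
    norm_num [h₁, h₂, hN] <;> ring

theorem sum_peaks_eq (hs : IsDyck s) (hL : 0 < L) :
    ∑ t ∈ peaks s, (2 * pht s t + 1) = L + 1 + ∑ t ∈ valleys s, (2 * pht s t + 1) := by
  have h := sum_peaks_sub_sum_valleys (s := s) (L - 1) (by omega)
  have e : L - 1 + 1 = L := by omega
  have hp : peaks s ⊆ Finset.range L := fun t ht => by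
    simp only [peaks, Finset.mem_filter, Finset.mem_Icc] at ht
    simp only [Finset.mem_range]
    omega
  have hv : valleys s ⊆ Finset.range L := fun t ht => by
    simp only [valleys, Finset.mem_filter, Finset.mem_Icc] at ht
    simp only [Finset.mem_range]
    omega
  rw [e, Finset.sum_sub_distrib, Finset.sum_ite_mem, Finset.sum_ite_mem,
    Finset.inter_eq_right.2 hp, Finset.inter_eq_right.2 hv] at h
  have a₁ := pht_succ s (L - 1)
  have a₂ := pht_succ s 0
  have a₃ := hs.nonneg (t := L - 1) (by omega)
  have a₄ := hs.nonneg (t := 1) (by omega)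
  rw [e, hs.2] at a₁
  rw [zero_add, pht_zero] at a₂
  have b₁ : stepVal s (L - 1) = -1 := by
    rcases stepVal_eq_or s (t := L - 1) (by omega) with h₁ | h₁ <;> omega
  have b₂ : stepVal s 0 = 1 := by
    rcases stepVal_eq_or s hL with h₁ | h₁ <;> omega
  have b₃ : pht s (L - 1) = 1 := by omega
  rw [b₁, b₂, b₃] at h
  push_cast [Nat.cast_sub (show 1 ≤ L from hL)] at h
  linarith

theorem ptWeight_peaks {F : Type*} [Field F] (x : F) (hs : IsDyck s) (hL : 0 < L) :
    ptWeight (fun h => x ^ (2 * h + 1)) s (peaks s) =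
      x ^ (L + 1) * ptWeight (fun h => x ^ (2 * h + 1)) s (valleys s) := by
  have h : ∑ t ∈ peaks s, (2 * (pht s t).toNat + 1) =
      L + 1 + ∑ t ∈ valleys s, (2 * (pht s t).toNat + 1) := by
    zify
    have h₁ : ∀ V : Finset ℕ, (∀ t ∈ V, t ≤ L) →
        ∑ t ∈ V, (2 * ((pht s t).toNat : ℤ) + 1) = ∑ t ∈ V, (2 * pht s t + 1) :=
      fun V hV => Finset.sum_congr rfl fun t ht => by
        rw [Int.toNat_of_nonneg (hs.nonneg (hV t ht))]
    rw [h₁ _ fun t => le_of_mem_peaks, h₁ _ fun t => le_of_mem_valleys]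
    exact sum_peaks_eq hs hL
  simp only [ptWeight, Finset.prod_pow_eq_pow_sum, h, pow_add _ (L + 1)]
  ring

end PeaksValleys

/-! ### Chains and transfer operators -/

section Transfer

variable {F : Type*} [Field F] {P : ℕ → Type*} [∀ j, Fintype (P j)]

/-- One step of the transfer-matrix recursion. -/
def transfer (v : ∀ j, P j → F) (M : ∀ j, P j → P (j + 1) → F) (g : ∀ j, P j → F) (j : ℕ)
    (D : P j) : F :=
  ∑ D', M j D D' * v (j + 1) D' * g (j + 1) D'

theorem sum_chain (v : ∀ j, P j → F) (M : ∀ j, P j → P (j + 1) → F) (k : ℕ)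
    (g : ∀ j, P j → F) :
    ∑ D : (∀ i : Fin (k + 1), P i),
      (∏ i : Fin (k + 1), v i (D i)) *
        (∏ j : Fin k, M j (D ⟨j, by omega⟩) (D ⟨(j : ℕ) + 1, by omega⟩)) *
          g k (D (Fin.last k)) =
    ∑ D : P 0, v 0 D * (transfer v M)^[k] g 0 D := by
  induction k generalizing g with
  | zero =>
    refine Fintype.sum_equiv (Equiv.piUnique fun i : Fin 1 => P i) _ _ fun D => ?_
    simp
  | succ k ih =>
    rw [Function.iterate_succ_apply, ← ih,
      ← (Fin.snocEquiv fun i : Fin (k + 2) => P i).sum_comp, Fintype.sum_prod_type_right]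
    refine Finset.sum_congr rfl fun D _ => ?_
    unfold transfer
    rw [Finset.mul_sum]
    refine Finset.sum_congr rfl fun D' _ => ?_
    have h₁ : ∀ (i : ℕ) (hi : i < k + 1),
        Fin.snocEquiv (fun i : Fin (k + 2) => P i) (D', D) ⟨i, by omega⟩ = D ⟨i, hi⟩ :=
      fun i hi => Fin.snoc_castSucc (α := fun i : Fin (k + 2) => P i) D' D ⟨i, hi⟩
    have h₂ : Fin.snocEquiv (fun i : Fin (k + 2) => P i) (D', D) ⟨k + 1, by omega⟩ = D' :=
      Fin.snoc_last (α := fun i : Fin (k + 2) => P i) D' D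
    have h₃ : ∀ i : Fin (k + 1),
        Fin.snocEquiv (fun i : Fin (k + 2) => P i) (D', D) i.castSucc = D i :=
      fun i => h₁ i i.isLt
    have h₄ : Fin.snocEquiv (fun i : Fin (k + 2) => P i) (D', D) (Fin.last (k + 1)) = D' := h₂
    have h₅ : ∏ j : Fin k, M j
          (Fin.snocEquiv (fun i : Fin (k + 2) => P i) (D', D) ⟨j, by omega⟩)
          (Fin.snocEquiv (fun i : Fin (k + 2) => P i) (D', D) ⟨(j : ℕ) + 1, by omega⟩) =
        ∏ j : Fin k, M j (D ⟨j, by omega⟩) (D ⟨(j : ℕ) + 1, by omega⟩) :=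
      Finset.prod_congr rfl fun j _ => by
        rw [h₁ j (by omega), h₁ (j + 1) (by omega)]
    have h₆ : ∏ j : Fin (k + 1), M j
          (Fin.snocEquiv (fun i : Fin (k + 2) => P i) (D', D) ⟨j, by omega⟩)
          (Fin.snocEquiv (fun i : Fin (k + 2) => P i) (D', D) ⟨(j : ℕ) + 1, by omega⟩) =
        (∏ j : Fin k, M j (D ⟨j, by omega⟩) (D ⟨(j : ℕ) + 1, by omega⟩)) *
          M k (D (Fin.last k)) D' := by
      rw [Fin.prod_univ_castSucc]
      refine congrArg₂ (· * ·) h₅ ?_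
      exact congrArg₂ (M k) (h₁ k (by omega)) h₂
    have h₇ : ∏ i : Fin (k + 2), v i (Fin.snocEquiv (fun i : Fin (k + 2) => P i) (D', D) i) =
        (∏ i : Fin (k + 1), v i (D i)) * v (k + 1) D' := by
      rw [Fin.prod_univ_castSucc]
      refine congrArg₂ (· * ·) (Finset.prod_congr rfl fun i _ => ?_) ?_
      · exact congrArg (v i) (h₃ i)
      · exact congrArg (v (k + 1)) h₄
    rw [h₆, h₇, h₄]
    ring

variable (v : ∀ j, P j → F) (A B : ∀ j, P j → P (j + 1) → F)

theorem transfer_smul (M : ∀ j, P j → P (j + 1) → F) (f g : ∀ j, P j → F) (j : ℕ) (a : F)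
    (h : ∀ D, f (j + 1) D = a * g (j + 1) D) (D : P j) :
    transfer v M f j D = a * transfer v M g j D := by
  simp only [transfer, Finset.mul_sum, h]
  exact Finset.sum_congr rfl fun _ _ => by ring

variable {v A B}

theorem transfer_iterate_eq (c : ℕ → F)
    (hAB : ∀ g j D, transfer v A (transfer v B g) j D =
      c (j + 1) * transfer v B (transfer v A g) j D)
    (hone : ∀ j D, transfer v A (fun _ _ => 1) j D =
      c (j + 1) * transfer v B (fun _ _ => 1) j D) (r : ℕ) :
    ∀ j D, transfer v A ((transfer v B)^[r] fun _ _ => 1) j D =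
      (∏ i ∈ Finset.range (r + 1), c (j + i + 1)) *
        (transfer v B)^[r + 1] (fun _ _ => 1) j D := by
  induction r with
  | zero =>
    intro j D
    simpa using hone j D
  | succ r ih =>
    intro j D
    rw [Function.iterate_succ_apply', hAB, transfer_smul v B _ _ j _ (ih (j + 1)),
      ← Function.iterate_succ_apply' (transfer v B), Finset.prod_range_succ' _ (r + 1),
      ← mul_assoc]
    simp only [add_zero, mul_comm (c (j + 1)), show ∀ i, j + (i + 1) + 1 = j + 1 + i + 1 by
      intro i; ring]

theorem iterate_transfer_eq (c : ℕ → F)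
    (hAB : ∀ g j D, transfer v A (transfer v B g) j D =
      c (j + 1) * transfer v B (transfer v A g) j D)
    (hone : ∀ j D, transfer v A (fun _ _ => 1) j D =
      c (j + 1) * transfer v B (fun _ _ => 1) j D) (k : ℕ) :
    ∀ j D, (transfer v A)^[k] (fun _ _ => 1) j D =
      (∏ i ∈ Finset.range k, c (j + i + 1) ^ (i + 1)) *
        (transfer v B)^[k] (fun _ _ => 1) j D := by
  induction k with
  | zero => simp
  | succ k ih =>
    intro j D
    rw [Function.iterate_succ_apply', transfer_smul v A _ _ j _ (ih (j + 1)),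
      transfer_iterate_eq c hAB hone, ← mul_assoc]
    congr 1
    rw [Finset.prod_range_succ', Finset.prod_range_succ' _ k, ← mul_assoc,
      ← Finset.prod_mul_distrib]
    simp only [add_zero, zero_add, pow_one]
    congr 1
    refine Finset.prod_congr rfl fun i _ => ?_
    rw [show j + (i + 1) + 1 = j + 1 + i + 1 by ring]
    ring

end Transfer

/-! ### Consecutive paths as boundaries of each other -/

section Boundaries

variable {m₁ m₂ L₁ L₂ : ℕ} (s₁ : Fin L₁ → Bool) (s₂ : Fin L₂ → Bool)

theorem aht_sub (m : ℕ) {L : ℕ} (s : Fin L → Bool) (t : ℕ) : aht m s ((t : ℤ) - m) = pht s t := by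
  simp [aht]

theorem forall_mem_Icc_iff (N : ℕ) (p : ℤ → Prop) (b : ℤ)
    (hb : b = (N : ℤ) - 1 - m₁) :
    (∀ x ∈ Finset.Icc (-(m₁ : ℤ)) b, p x) ↔ ∀ t : ℕ, t < N → p ((t : ℤ) - m₁) := by
  constructor
  · intro h t ht
    exact h _ (Finset.mem_Icc.2 ⟨by omega, by omega⟩)
  · intro h x hx
    rw [Finset.mem_Icc] at hx
    have := h (x + m₁).toNat (by omega)
    rwa [show (((x + m₁).toNat : ℕ) : ℤ) - m₁ = x by omega] at this

theorem aht_sub_two (t : ℕ) (h₂ : m₂ = m₁ + 2) :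
    aht m₂ s₂ ((t : ℤ) - m₁) = pht s₂ (t + 2) := by
  rw [← aht_sub m₂ s₂ (t + 2)]
  congr 1
  push_cast
  omega

theorem pathLT_iff (hL₁ : L₁ = 2 * m₁) (h₂ : m₂ = m₁ + 2) :
    PathLT m₁ m₂ s₁ s₂ ↔ StrictBelow 0 L₁ (pht s₁) fun t => pht s₂ (t + 2) := by
  unfold PathLT StrictBelow
  rw [forall_mem_Icc_iff (2 * m₁ + 1) _ _ (by push_cast; ring)]
  simp only [aht_sub, aht_sub_two s₂ _ h₂, Nat.lt_succ_iff, hL₁, Nat.zero_le, true_imp_iff]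

theorem pathLE_iff (hL₁ : L₁ = 2 * m₁) (h₂ : m₂ = m₁ + 2) :
    PathLE m₁ m₂ s₁ s₂ ↔ WeakBelow 0 L₁ (pht s₁) fun t => pht s₂ (t + 2) := by
  unfold PathLE WeakBelow
  rw [forall_mem_Icc_iff (2 * m₁ + 1) _ _ (by push_cast; ring),
    forall_mem_Icc_iff (2 * m₁) _ _ (by push_cast; ring)]
  have e : ∀ t : ℕ, (t : ℤ) - m₁ + 1 = ((t + 1 : ℕ) : ℤ) - m₁ := fun t => by push_cast; ring
  simp only [e, aht_sub, aht_sub_two s₂ _ h₂, Nat.lt_succ_iff, hL₁, Nat.zero_le, true_imp_iff]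

theorem strictBelow_shift (f g : ℕ → ℤ) (N : ℕ) :
    StrictBelow 0 N f (fun t => g (t + 2)) ↔
      StrictBelow 2 (N + 2) (fun t => f (t - 2)) g := by
  constructor
  · intro h t h₁ h₂
    obtain ⟨t, rfl⟩ : ∃ r, t = r + 2 := ⟨t - 2, by omega⟩
    exact h t (by omega) (by omega)
  · intro h t h₁ h₂
    exact h (t + 2) (by omega) (by omega)

theorem weakBelow_shift (f g : ℕ → ℤ) (N : ℕ) :
    WeakBelow 0 N f (fun t => g (t + 2)) ↔
      WeakBelow 2 (N + 2) (fun t => f (t - 2)) g := by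
  constructor
  · refine fun h => ⟨fun t h₁ h₂ => ?_, fun t h₁ h₂ => ?_⟩
    · obtain ⟨t, rfl⟩ : ∃ r, t = r + 2 := ⟨t - 2, by omega⟩
      exact h.1 t (by omega) (by omega)
    · obtain ⟨t, rfl⟩ : ∃ r, t = r + 2 := ⟨t - 2, by omega⟩
      exact h.2 t (by omega) (by omega)
  · refine fun h => ⟨fun t h₁ h₂ => ?_, fun t h₁ h₂ => ?_⟩
    · exact h.1 (t + 2) (by omega) (by omega)
    · exact h.2 (t + 2) (by omega) (by omega)

variable {F : Type*} [Field F]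

theorem interProd_eq_prod_range (f : ℕ → F) (hL₁ : L₁ = 2 * m₁) (h₂ : m₂ = m₁ + 2) :
    interProd (fun p => f p.2) m₁ m₂ s₁ s₂ =
      ∏ t ∈ (Finset.range (L₁ + 1)).filter (fun t => pht s₁ t = pht s₂ (t + 2)),
        f (pht s₁ t).toNat := by
  unfold interProd interPts
  symm
  refine Finset.prod_bij' (fun t _ => (t : ℤ) - m₁) (fun x _ => (x + m₁).toNat) ?_ ?_ ?_ ?_ ?_
  · intro t ht
    simp only [Finset.mem_filter, Finset.mem_range] at ht
    simp only [Finset.mem_filter, Finset.mem_Icc, aht_sub, aht_sub_two s₂ t h₂]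
    exact ⟨⟨by omega, by omega⟩, ht.2⟩
  · intro x hx
    simp only [Finset.mem_filter, Finset.mem_Icc] at hx
    have e : (((x + m₁).toNat : ℕ) : ℤ) - m₁ = x := by omega
    simp only [Finset.mem_filter, Finset.mem_range]
    refine ⟨by omega, ?_⟩
    rw [← aht_sub m₁ s₁, ← aht_sub_two s₂ _ h₂, e]
    exact hx.2
  · intro t _
    simp
  · intro x hx
    simp only [Finset.mem_filter, Finset.mem_Icc] at hx
    omega
  · intro t _
    simp only [aht_sub]

theorem prod_touch_shift (f : ℕ → F) (hL₂ : L₂ = L₁ + 4) :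
    ∏ t ∈ (Finset.range (L₁ + 1)).filter (fun t => pht s₁ t = pht s₂ (t + 2)),
        f (pht s₁ t).toNat =
      ∏ t ∈ (Finset.Icc 2 (L₂ - 2)).filter (fun t => pht s₁ (t - 2) = pht s₂ t),
        f (pht s₂ t).toNat := by
  refine Finset.prod_bij' (fun t _ => t + 2) (fun t _ => t - 2) ?_ ?_ ?_ ?_ ?_
  · intro t ht
    simp only [Finset.mem_filter, Finset.mem_range] at ht
    simp only [Finset.mem_filter, Finset.mem_Icc, Nat.add_sub_cancel]
    exact ⟨⟨by omega, by omega⟩, ht.2⟩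
  · intro t ht
    simp only [Finset.mem_filter, Finset.mem_Icc] at ht
    simp only [Finset.mem_filter, Finset.mem_range]
    refine ⟨by omega, ?_⟩
    rw [show t - 2 + 2 = t by omega]
    exact ht.2
  · intro t _
    simp
  · intro t ht
    simp only [Finset.mem_filter, Finset.mem_Icc] at ht
    omega
  · intro t ht
    simp only [Finset.mem_filter, Finset.mem_range] at ht
    rw [ht.2]

variable {s₁ s₂}

theorem IsDyck.isBoundary_shift_right (h : IsDyck s₁) :
    IsBoundary 2 (L₁ + 2) fun t => pht s₁ (t - 2) := by
  refine ⟨fun t h₁ h₂ => h.nonneg (by omega), fun t h₁ h₂ => ?_, fun t h₁ h₂ => ?_⟩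
  · have := pht_step s₁ (t := t - 2) (by omega)
    rwa [show t - 2 + 1 = t + 1 - 2 by omega] at this
  · have := pht_emod_two s₁ (t := t - 2) (by omega)
    push_cast [Nat.cast_sub h₁] at this
    omega

theorem IsDyck.isBoundary_shift_left (h : IsDyck s₂) (hL₂ : L₂ = L₁ + 4) :
    IsBoundary 0 L₁ fun t => pht s₂ (t + 2) := by
  refine ⟨fun t h₁ h₂ => h.nonneg (by omega), fun t h₁ h₂ => ?_, fun t h₁ h₂ => ?_⟩
  · have := pht_step s₂ (t := t + 2) (by omega)
    rwa [show t + 2 + 1 = t + 1 + 2 by omega] at this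
  · have := pht_emod_two s₂ (t := t + 2) (by omega)
    push_cast at this
    omega

end Boundaries

/-! ### The commutation relation -/

section Commutation

variable {F : Type*} [Field F]

/-- The weight of a path, extended by zero to non-Dyck paths. -/
def dyckWeight (x : F) {L : ℕ} (s : Fin L → Bool) : F :=
  if IsDyck s then ptWeight (fun h => x ^ (2 * h + 1)) s (valleys s) else 0

/-- The interaction of consecutive paths in a weak tuple. -/
def weakStep (x : F) (m₁ m₂ : ℕ) {L₁ L₂ : ℕ} (s₁ : Fin L₁ → Bool) (s₂ : Fin L₂ → Bool) : F :=
  if IsDyck s₁ ∧ PathLE m₁ m₂ s₁ s₂ then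
    interProd (fun p => 1 - (x ^ (2 * p.2 + 1))⁻¹) m₁ m₂ s₁ s₂
  else 0

/-- The interaction of consecutive paths in a strict tuple. -/
def strictStep (F : Type*) [Field F] (m₁ m₂ : ℕ) {L₁ L₂ : ℕ} (s₁ : Fin L₁ → Bool)
    (s₂ : Fin L₂ → Bool) : F :=
  if IsDyck s₁ ∧ PathLT m₁ m₂ s₁ s₂ then 1 else 0

variable {x : F} {m₁ m₂ m₃ L₁ L₂ L₃ : ℕ} {s₁ : Fin L₁ → Bool}

theorem sum_between (hx : x ≠ 0) (hx₁ : ∀ h : ℕ, 1 - x ^ (2 * h + 1) ≠ 0) (hm : 0 < m₁)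
    (hL₁ : L₁ = 2 * m₁) (hL₂ : L₂ = 2 * m₂) (h₂ : m₂ = m₁ + 2) (hs₁ : IsDyck s₁)
    {u : ℕ → ℤ} (hu : IsBoundary 0 L₂ u) :
    ∑ s : Fin L₂ → Bool, weakStep x m₁ m₂ s₁ s * dyckWeight x s *
        (if StrictBelow 0 L₂ (pht s) u then 1 else 0) =
      x ^ (2 * m₂ + 1) * ∑ s : Fin L₂ → Bool, strictStep F m₁ m₂ s₁ s * dyckWeight x s *
        (if WeakBelow 0 L₂ (pht s) u then
          ∏ t ∈ (Finset.range (L₂ + 1)).filter (fun t => pht s t = u t),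
            (1 - (x ^ (2 * (pht s t).toNat + 1))⁻¹) else 0) := by
  have e : L₁ + 2 = L₂ - 2 := by omega
  have key := sum_exchange (L := L₂) (l := fun t => pht s₁ (t - 2)) (u := u) (by omega)
    (e ▸ hs₁.isBoundary_shift_right) (pht_zero s₁)
    (by rw [← e, Nat.add_sub_cancel]; exact hs₁.2) hu (fun h => x ^ (2 * h + 1))
    (fun h => pow_ne_zero _ hx) hx₁
  rw [Finset.sum_filter, Finset.sum_filter] at key
  rw [Finset.mul_sum]
  refine Eq.trans ?_ (key.trans ?_)
  · refine Finset.sum_congr rfl fun s _ => ?_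
    rw [weakStep, dyckWeight, interProd_eq_prod_range s₁ s (fun h => 1 - (x ^ (2 * h + 1))⁻¹)
      hL₁ h₂, prod_touch_shift s₁ s (fun h => 1 - (x ^ (2 * h + 1))⁻¹) (by omega),
      pathLE_iff s₁ s hL₁ h₂, weakBelow_shift, e]
    by_cases c₁ : IsDyck s <;> by_cases c₂ : WeakBelow 2 (L₂ - 2) (fun t => pht s₁ (t - 2)) (pht s)
      <;> by_cases c₃ : StrictBelow 0 L₂ (pht s) u <;> simp [c₁, c₂, c₃, hs₁, mul_comm]
  · refine Finset.sum_congr rfl fun s _ => ?_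
    rw [strictStep, dyckWeight, pathLT_iff s₁ s hL₁ h₂, strictBelow_shift, e]
    by_cases c₁ : IsDyck s
    · rw [ptWeight_peaks x c₁ (by omega), ← hL₂]
      by_cases c₂ : StrictBelow 2 (L₂ - 2) (fun t => pht s₁ (t - 2)) (pht s)
        <;> by_cases c₃ : WeakBelow 0 L₂ (pht s) u <;> simp [c₁, c₂, c₃, hs₁, mul_assoc]
    · simp [c₁]

theorem sum_weakStep_strictStep (hx : x ≠ 0) (hx₁ : ∀ h : ℕ, 1 - x ^ (2 * h + 1) ≠ 0)
    (hm : 0 < m₁) (hL₁ : L₁ = 2 * m₁) (hL₂ : L₂ = 2 * m₂) (hL₃ : L₃ = 2 * m₃)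
    (h₂ : m₂ = m₁ + 2) (h₃ : m₃ = m₂ + 2) (hs₁ : IsDyck s₁) {s₃ : Fin L₃ → Bool}
    (hs₃ : IsDyck s₃) :
    ∑ s : Fin L₂ → Bool, weakStep x m₁ m₂ s₁ s * dyckWeight x s * strictStep F m₂ m₃ s s₃ =
      x ^ (2 * m₂ + 1) *
        ∑ s : Fin L₂ → Bool, strictStep F m₁ m₂ s₁ s * dyckWeight x s *
          weakStep x m₂ m₃ s s₃ := by
  have key := sum_between hx hx₁ hm hL₁ hL₂ h₂ hs₁
    (hs₃.isBoundary_shift_left (L₁ := L₂) (by omega))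
  refine Eq.trans ?_ (key.trans (congrArg (x ^ (2 * m₂ + 1) * ·) ?_))
  · refine Finset.sum_congr rfl fun s _ => ?_
    rw [strictStep, pathLT_iff s s₃ hL₂ h₃]
    by_cases c : IsDyck s <;> simp [c, dyckWeight]
  · refine Finset.sum_congr rfl fun s _ => ?_
    rw [weakStep, pathLE_iff s s₃ hL₂ h₃,
      interProd_eq_prod_range s s₃ (fun h => 1 - (x ^ (2 * h + 1))⁻¹) hL₂ h₃]
    by_cases c : IsDyck s <;> simp [c, dyckWeight]

theorem sum_weakStep (hx : x ≠ 0) (hx₁ : ∀ h : ℕ, 1 - x ^ (2 * h + 1) ≠ 0)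
    (hm : 0 < m₁) (hL₁ : L₁ = 2 * m₁) (hL₂ : L₂ = 2 * m₂) (h₂ : m₂ = m₁ + 2)
    (hs₁ : IsDyck s₁) :
    ∑ s : Fin L₂ → Bool, weakStep x m₁ m₂ s₁ s * dyckWeight x s =
      x ^ (2 * m₂ + 1) *
        ∑ s : Fin L₂ → Bool, strictStep F m₁ m₂ s₁ s * dyckWeight x s := by
  have key := sum_between (u := fun t => (t : ℤ) + 2) hx hx₁ hm hL₁ hL₂ h₂ hs₁
    ⟨fun t _ _ => by omega, fun t _ _ => by push_cast; omega, fun t _ _ => by omega⟩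
  have hlt : ∀ s : Fin L₂ → Bool, StrictBelow 0 L₂ (pht s) fun t => (t : ℤ) + 2 :=
    fun s t _ ht => by
      exact lt_of_le_of_lt (pht_le s ht) (lt_add_of_pos_right _ two_pos)
  have hle : ∀ s : Fin L₂ → Bool, WeakBelow 0 L₂ (pht s) fun t => (t : ℤ) + 2 :=
    fun s => ⟨fun t h h' => (hlt s t h h').le, fun t h h' hc => (hlt s t h h'.le).ne hc.1⟩
  have hempty : ∀ s : Fin L₂ → Bool,
      (Finset.range (L₂ + 1)).filter (fun t => pht s t = (t : ℤ) + 2) = ∅ := fun s =>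
    Finset.filter_eq_empty_iff.2 fun t ht =>
      (hlt s t (Nat.zero_le _) (by simpa [Nat.lt_succ_iff] using ht)).ne
  simpa only [hlt, hle, hempty, if_true, Finset.prod_empty, mul_one] using key

end Commutation

/-! ### Tuples of paths as chains -/

section Tuples

variable {F : Type*} [Field F]

theorem zpow_two_mul_add_one (x : F) (h : ℕ) : x ^ (2 * (h : ℤ) + 1) = x ^ (2 * h + 1) := by
  exact_mod_cast zpow_natCast x (2 * h + 1)

theorem wtVal_eq_ptWeight (x : F) (a : ℤ) {L : ℕ} (s : Fin L → Bool) :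
    wtVal (fun p => (1 - x ^ (2 * (p.2 : ℤ) + 1))⁻¹) (fun p => x ^ (2 * (p.2 : ℤ) + 1)) a s =
      ptWeight (fun h => x ^ (2 * h + 1)) s (valleys s) := by
  simp only [wtVal, ptWeight, ptOf, zpow_two_mul_add_one]

theorem weakSum_eq_sum_chain (x : F) (n k : ℕ) :
    weakSum (fun p => (1 - x ^ (2 * (p.2 : ℤ) + 1))⁻¹) (fun p => x ^ (2 * (p.2 : ℤ) + 1)) n
        (k + 1) =
      ∑ D : DyckTuple n (k + 1), (∏ i : Fin (k + 1), dyckWeight x (D i)) *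
        (∏ j : Fin k, weakStep x (n + 2 * j) (n + 2 * (j + 1)) (D ⟨j, by omega⟩)
          (D ⟨(j : ℕ) + 1, by omega⟩)) * 1 := by
  unfold weakSum weakTuples
  rw [Finset.sum_filter]
  refine Finset.sum_congr rfl fun D _ => ?_
  simp only [wtVal_eq_ptWeight, mul_one]
  simp only [zpow_two_mul_add_one]
  split_ifs with h
  · refine congrArg₂ (· * ·) ?_ ?_
    · exact Finset.prod_congr rfl fun i _ => by rw [dyckWeight, if_pos (h.1 i)]
    · refine Finset.prod_congr rfl fun j _ => ?_
      exact (if_pos ⟨h.1 _, h.2 j (by have := j.isLt; omega)⟩).symm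
  · rw [not_and_or] at h
    symm
    rcases h with h | h
    · obtain ⟨i, hi⟩ := not_forall.1 h
      rw [Finset.prod_eq_zero (Finset.mem_univ i) (if_neg hi), zero_mul]
    · obtain ⟨i, hi⟩ := not_forall.1 h
      obtain ⟨hik, hi⟩ := not_forall.1 hi
      have hik' : i < k := Nat.lt_of_succ_lt_succ hik
      rw [Finset.prod_eq_zero (s := (Finset.univ : Finset (Fin k)))
        (Finset.mem_univ ⟨i, hik'⟩) (if_neg fun hc => hi hc.2), mul_zero]

theorem strictSum_eq_sum_chain (x : F) (n k : ℕ) :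
    strictSum (fun p => (1 - x ^ (2 * (p.2 : ℤ) + 1))⁻¹) (fun p => x ^ (2 * (p.2 : ℤ) + 1)) n
        (k + 1) =
      ∑ D : DyckTuple n (k + 1), (∏ i : Fin (k + 1), dyckWeight x (D i)) *
        (∏ j : Fin k, strictStep F (n + 2 * j) (n + 2 * (j + 1)) (D ⟨j, by omega⟩)
          (D ⟨(j : ℕ) + 1, by omega⟩)) * 1 := by
  unfold strictSum strictTuples
  rw [Finset.sum_filter]
  refine Finset.sum_congr rfl fun D _ => ?_
  simp only [wtVal_eq_ptWeight, mul_one]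
  split_ifs with h
  · rw [Finset.prod_eq_one (s := (Finset.univ : Finset (Fin k))), mul_one]
    · exact Finset.prod_congr rfl fun i _ => by rw [dyckWeight, if_pos (h.1 i)]
    · intro j _
      exact if_pos ⟨h.1 _, h.2 j (by have := j.isLt; omega)⟩
  · rw [not_and_or] at h
    symm
    rcases h with h | h
    · obtain ⟨i, hi⟩ := not_forall.1 h
      rw [Finset.prod_eq_zero (Finset.mem_univ i) (if_neg hi), zero_mul]
    · obtain ⟨i, hi⟩ := not_forall.1 h
      obtain ⟨hik, hi⟩ := not_forall.1 hi
      have hik' : i < k := Nat.lt_of_succ_lt_succ hik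
      rw [Finset.prod_eq_zero (s := (Finset.univ : Finset (Fin k)))
        (Finset.mem_univ ⟨i, hik'⟩) (if_neg fun hc => hi hc.2), mul_zero]

/-- The paths at level `j` of a tuple. -/
abbrev LevelPath (n j : ℕ) := Fin (2 * (n + 2 * j)) → Bool

theorem transfer_weak_strict {x : F} (hx : x ≠ 0) (hx₁ : ∀ h : ℕ, 1 - x ^ (2 * h + 1) ≠ 0)
    {n : ℕ} (hn : 0 < n) (g : ∀ j, LevelPath n j → F) (j : ℕ) (D : LevelPath n j) :
    transfer (P := LevelPath n) (fun _ => dyckWeight x)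
        (fun j => weakStep x (n + 2 * j) (n + 2 * (j + 1)))
        (transfer (fun _ => dyckWeight x)
          (fun j => strictStep F (n + 2 * j) (n + 2 * (j + 1))) g) j D =
      x ^ (2 * (n + 2 * (j + 1)) + 1) *
        transfer (P := LevelPath n) (fun _ => dyckWeight x)
          (fun j => strictStep F (n + 2 * j) (n + 2 * (j + 1)))
          (transfer (fun _ => dyckWeight x)
            (fun j => weakStep x (n + 2 * j) (n + 2 * (j + 1))) g) j D := by
  by_cases hD : IsDyck D
  · simp only [transfer, Finset.mul_sum]
    rw [Finset.sum_comm, Finset.sum_comm (γ := LevelPath n (j + 1))]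
    refine Finset.sum_congr rfl fun D'' _ => ?_
    by_cases hD'' : IsDyck D''
    · have key := sum_weakStep_strictStep (m₁ := n + 2 * j) (m₂ := n + 2 * (j + 1))
        (m₃ := n + 2 * (j + 1 + 1)) hx hx₁ (by omega) rfl rfl rfl (by ring) (by ring) hD hD''
      have key' := congrArg (fun z => z * (dyckWeight x D'' * g (j + 1 + 1) D'')) key
      simp only [Finset.sum_mul, Finset.mul_sum] at key'
      refine Eq.trans ?_ (key'.trans ?_)
      all_goals exact Finset.sum_congr rfl fun D' _ => by ring
    · simp [dyckWeight, hD'']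
  · simp [transfer, weakStep, strictStep, hD]

theorem transfer_weak_one {x : F} (hx : x ≠ 0) (hx₁ : ∀ h : ℕ, 1 - x ^ (2 * h + 1) ≠ 0)
    {n : ℕ} (hn : 0 < n) (j : ℕ) (D : LevelPath n j) :
    transfer (P := LevelPath n) (fun _ => dyckWeight x)
        (fun j => weakStep x (n + 2 * j) (n + 2 * (j + 1))) (fun _ _ => 1) j D =
      x ^ (2 * (n + 2 * (j + 1)) + 1) *
        transfer (P := LevelPath n) (fun _ => dyckWeight x)
          (fun j => strictStep F (n + 2 * j) (n + 2 * (j + 1))) (fun _ _ => 1) j D := by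
  by_cases hD : IsDyck D
  · simp only [transfer, mul_one]
    exact sum_weakStep hx hx₁ (by omega) rfl rfl (by ring) hD
  · simp [transfer, weakStep, strictStep, hD]

theorem weakSum_eq_strictSum {x : F} (hx : x ≠ 0) (hx₁ : ∀ h : ℕ, 1 - x ^ (2 * h + 1) ≠ 0)
    {n : ℕ} (hn : 0 < n) (k : ℕ) :
    weakSum (fun p => (1 - x ^ (2 * (p.2 : ℤ) + 1))⁻¹) (fun p => x ^ (2 * (p.2 : ℤ) + 1)) n
        (k + 1) =
      (∏ i ∈ Finset.range k, (x ^ (2 * (n + 2 * (i + 1)) + 1)) ^ (i + 1)) *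
        strictSum (fun p => (1 - x ^ (2 * (p.2 : ℤ) + 1))⁻¹)
          (fun p => x ^ (2 * (p.2 : ℤ) + 1)) n (k + 1) := by
  have hA := sum_chain (P := LevelPath n) (fun _ => dyckWeight x)
    (fun j => weakStep x (n + 2 * j) (n + 2 * (j + 1))) k (fun _ _ => 1)
  have hB := sum_chain (P := LevelPath n) (fun _ => dyckWeight x)
    (fun j => strictStep F (n + 2 * j) (n + 2 * (j + 1))) k (fun _ _ => 1)
  rw [weakSum_eq_sum_chain, strictSum_eq_sum_chain]
  refine hA.trans (Eq.trans ?_ (congrArg _ hB.symm))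
  rw [Finset.mul_sum]
  refine Finset.sum_congr rfl fun D _ => ?_
  rw [iterate_transfer_eq (fun i => x ^ (2 * (n + 2 * i) + 1)) (transfer_weak_strict hx hx₁ hn)
    (transfer_weak_one hx hx₁ hn)]
  simp only [zero_add]
  ring

theorem sum_range_exponent (n k : ℕ) :
    (k + 1) * (k + 1 - 1) * (6 * n + 8 * (k + 1) - 1) / 6 =
      ∑ i ∈ Finset.range k, (2 * (n + 2 * (i + 1)) + 1) * (i + 1) := by
  have h : (k + 1) * k * (6 * n + 8 * k + 7) =
      6 * ∑ i ∈ Finset.range k, (2 * (n + 2 * (i + 1)) + 1) * (i + 1) := by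
    induction k with
    | zero => simp
    | succ k ih =>
      rw [Finset.sum_range_succ, mul_add 6, ← ih]
      ring
  rw [show 6 * n + 8 * (k + 1) - 1 = 6 * n + 8 * k + 7 by omega, Nat.add_sub_cancel, h,
    Nat.mul_div_cancel_left _ (by norm_num)]

theorem one_sub_ratFunc_X_pow_ne_zero (h : ℕ) :
    1 - (RatFunc.X : RatFunc ℚ) ^ (2 * h + 1) ≠ 0 := by
  rw [sub_ne_zero, ← RatFunc.algebraMap_X, ← map_pow, ← map_one (algebraMap (Polynomial ℚ) (RatFunc ℚ))]
  intro hc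
  have := congrArg Polynomial.natDegree (RatFunc.algebraMap_injective ℚ hc)
  simp at this

end Tuples

theorem statement_3 (n k : ℕ) (hn : 0 < n) (hk : 0 < k) :
    weakSum (fun p => (1 - (RatFunc.X : RatFunc ℚ) ^ (2 * (p.2 : ℤ) + 1))⁻¹)
        (fun p => (RatFunc.X : RatFunc ℚ) ^ (2 * (p.2 : ℤ) + 1)) n k =
      (RatFunc.X : RatFunc ℚ) ^ (k * (k - 1) * (6 * n + 8 * k - 1) / 6) *
        strictSum (fun p => (1 - (RatFunc.X : RatFunc ℚ) ^ (2 * (p.2 : ℤ) + 1))⁻¹)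
          (fun p => (RatFunc.X : RatFunc ℚ) ^ (2 * (p.2 : ℤ) + 1)) n k := by
  obtain ⟨k, rfl⟩ : ∃ r, k = r + 1 := ⟨k - 1, by omega⟩
  rw [weakSum_eq_strictSum RatFunc.X_ne_zero one_sub_ratFunc_X_pow_ne_zero hn,
    sum_range_exponent]
  simp only [← pow_mul, Finset.prod_pow_eq_pow_sum]

end Paper
end
end

section
/- For every nonnegative integer n, the identity Σ_{π∈Alt_{2n+1}} q^{maj(κ_{2n+1}π^{-1})} = Σ_{π∈Alt_{2n+1}} q^{inv(π)−ndes(π_e)} holds (as an identity of Laurent polynomials in q; in fact all exponents on the right are nonnegative). -/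
open Finset

attribute [local instance 10] Classical.propDecidable

noncomputable section

namespace Paper

/-! ### Gaussian binomial coefficients -/

section Shuffle

variable {R : Type*} [CommRing R]

/-- The Gaussian binomial coefficient `[p + s choose p]_q`, by its Pascal recurrence. -/
def gaussBinom (q : R) : ℕ → ℕ → R
  | 0, _ => 1
  | _ + 1, 0 => 1
  | p + 1, s + 1 => gaussBinom q p (s + 1) + q ^ (p + 1) * gaussBinom q (p + 1) s

theorem gaussBinom_zero_left (q : R) (s : ℕ) : gaussBinom q 0 s = 1 := by
  simp [gaussBinom]

theorem gaussBinom_zero_right (q : R) (p : ℕ) : gaussBinom q p 0 = 1 := by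
  cases p <;> simp [gaussBinom]

theorem gaussBinom_succ_succ (q : R) (p s : ℕ) :
    gaussBinom q (p + 1) (s + 1) =
      gaussBinom q p (s + 1) + q ^ (p + 1) * gaussBinom q (p + 1) s := by
  rw [gaussBinom]

theorem gaussBinom_succ_succ' (q : R) : ∀ p s : ℕ,
    gaussBinom q (p + 1) (s + 1) =
      q ^ (s + 1) * gaussBinom q p (s + 1) + gaussBinom q (p + 1) s
  | 0, 0 => by simp [gaussBinom, add_comm]
  | 0, s + 1 => by
    have h := gaussBinom_succ_succ' q 0 s
    rw [gaussBinom_succ_succ, h]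
    rw [gaussBinom_succ_succ] at h
    simp only [gaussBinom_zero_left] at h ⊢
    linear_combination h
  | p + 1, 0 => by
    have h := gaussBinom_succ_succ' q p 0
    rw [gaussBinom_succ_succ, h]
    rw [gaussBinom_succ_succ] at h
    simp only [gaussBinom_zero_right] at h ⊢
    linear_combination q * h
  | p + 1, s + 1 => by
    have h₁ := gaussBinom_succ_succ' q p (s + 1)
    have h₂ := gaussBinom_succ_succ' q (p + 1) s
    rw [gaussBinom_succ_succ, h₂]
    nth_rewrite 1 [h₁]
    rw [gaussBinom_succ_succ q p (s + 1)]
    have h₃ := gaussBinom_succ_succ q (p + 1) s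
    linear_combination (-1 : R) * h₃ + h₂

/-! ### Statistics of reversed words -/

/-- The major index, with letters compared through `k`, of the reversal of a word. -/
def majRev (k : ℕ → ℕ) : List ℕ → ℕ
  | [] => 0
  | [_] => 0
  | a :: b :: t => (if k a < k b then t.length + 1 else 0) + majRev k (b :: t)

/-- The number of inversions of the reversal of a word. -/
def invRev : List ℕ → ℕ
  | [] => 0
  | a :: t => t.countP (fun b => a < b) + invRev t

/-- The number of even letters of a list whose predecessor among the even numbers occurs later. -/
def evenAscRev : List ℕ → ℕ
  | [] => 0
  | a :: t => (if a % 2 = 0 ∧ ∃ b ∈ t, b + 2 = a then 1 else 0) + evenAscRev t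

/-! ### Shuffles -/

/-- All shuffles of two words. -/
def shuffles : List ℕ → List ℕ → List (List ℕ)
  | [], y => [y]
  | a :: x, [] => [a :: x]
  | a :: x, b :: y =>
    (shuffles x (b :: y)).map (List.cons a) ++ (shuffles (a :: x) y).map (List.cons b)
termination_by x y => x.length + y.length

theorem shuffles_nil_right (x : List ℕ) : shuffles x [] = [x] := by
  cases x <;> simp [shuffles]

theorem perm_of_mem_shuffles : ∀ {x y u : List ℕ}, u ∈ shuffles x y → u.Perm (x ++ y)
  | [], y, u, h => by
    simp only [shuffles, List.mem_singleton] at h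
    simp [h]
  | a :: x, [], u, h => by
    simp only [shuffles, List.mem_singleton] at h
    simp [h]
  | a :: x, b :: y, u, h => by
    simp only [shuffles, List.mem_append, List.mem_map] at h
    rcases h with ⟨v, hv, rfl⟩ | ⟨v, hv, rfl⟩
    · exact (perm_of_mem_shuffles hv).cons a
    · exact ((perm_of_mem_shuffles hv).cons b).trans List.perm_middle.symm
termination_by x y => x.length + y.length

theorem mem_shuffles_iff (p : ℕ → Bool) : ∀ {x y u : List ℕ}, (∀ a ∈ x, p a = true) →
    (∀ b ∈ y, p b = false) →
    (u ∈ shuffles x y ↔ u.filter p = x ∧ u.filter (fun a => !p a) = y)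
  | [], y, u, _, hy => by
    simp only [shuffles, List.mem_singleton]
    constructor
    · rintro rfl
      refine ⟨List.filter_eq_nil_iff.2 fun b hb => by simp [hy b hb],
        List.filter_eq_self.2 fun b hb => by simp [hy b hb]⟩
    · rintro ⟨h₁, rfl⟩
      rw [List.filter_eq_nil_iff] at h₁
      exact (List.filter_eq_self.2 fun b hb => by simp [h₁ b hb]).symm
  | a :: x, [], u, hx, _ => by
    simp only [shuffles, List.mem_singleton]
    constructor
    · rintro rfl
      refine ⟨List.filter_eq_self.2 hx,
        List.filter_eq_nil_iff.2 fun b hb => by simp [hx b hb]⟩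
    · rintro ⟨h₁, h₂⟩
      rw [List.filter_eq_nil_iff] at h₂
      rw [← h₁]
      exact (List.filter_eq_self.2 fun b hb => by simpa using h₂ b hb).symm
  | a :: x, b :: y, u, hx, hy => by
    have ha : p a = true := hx a (by simp)
    have hb : p b = false := hy b (by simp)
    simp only [shuffles, List.mem_append, List.mem_map]
    constructor
    · rintro (⟨v, hv, rfl⟩ | ⟨v, hv, rfl⟩)
      · have := (mem_shuffles_iff p (fun c hc => hx c (by simp [hc])) hy).1 hv
        simp [ha, this.1, this.2]
      · have := (mem_shuffles_iff p hx (fun c hc => hy c (by simp [hc]))).1 hv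
        simp [hb, this.1, this.2]
    · cases u with
      | nil => simp
      | cons c v =>
        cases hc : p c with
        | true =>
          simp only [List.filter_cons, hc]
          rintro ⟨h₁, h₂⟩
          simp only [if_true, List.cons.injEq] at h₁
          refine Or.inl ⟨v, ?_, by simp [h₁.1]⟩
          exact (mem_shuffles_iff p (fun c hc => hx c (by simp [hc])) hy).2
            ⟨h₁.2, by simpa using h₂⟩
        | false =>
          simp only [List.filter_cons, hc]
          rintro ⟨h₁, h₂⟩
          simp only [Bool.not_false, if_true, List.cons.injEq] at h₂
          refine Or.inr ⟨v, ?_, by simp [h₂.1]⟩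
          exact (mem_shuffles_iff p hx (fun c hc => hy c (by simp [hc]))).2
            ⟨by simpa using h₁, h₂.2⟩
termination_by x y => x.length + y.length

theorem nodup_shuffles : ∀ {x y : List ℕ}, x.Disjoint y → (shuffles x y).Nodup
  | [], y, _ => by simp [shuffles]
  | a :: x, [], _ => by simp [shuffles]
  | a :: x, b :: y, h => by
    have hab : a ≠ b := fun e => h (a := a) (by simp) (by simp [e])
    rw [shuffles, List.nodup_append']
    refine ⟨(nodup_shuffles fun c hc => h (by simp [hc])).map (List.cons_injective),
      (nodup_shuffles fun c hc hc' => h hc (by simp [hc'])).map (List.cons_injective), ?_⟩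
    intro u hu hv
    simp only [List.mem_map] at hu hv
    obtain ⟨v, -, rfl⟩ := hu
    obtain ⟨w, -, hw⟩ := hv
    exact hab (List.cons.inj hw).1.symm
termination_by x y => x.length + y.length

theorem length_of_mem_shuffles {x y u : List ℕ} (h : u ∈ shuffles x y) :
    u.length = x.length + y.length := by
  simpa using (perm_of_mem_shuffles h).length_eq

/-! ### Shuffle identities -/

theorem sum_shuffles_cons_cons (f : List ℕ → R) (a b : ℕ) (x y : List ℕ) :
    ((shuffles (a :: x) (b :: y)).map f).sum =
      ((shuffles x (b :: y)).map fun u => f (a :: u)).sum +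
        ((shuffles (a :: x) y).map fun u => f (b :: u)).sum := by
  simp [shuffles, Function.comp_def]

theorem sum_map_congr_mul {l : List (List ℕ)} {f g : List ℕ → R} (c : R)
    (h : ∀ u ∈ l, f u = c * g u) : (l.map f).sum = c * (l.map g).sum := by
  rw [← List.sum_map_mul_left]
  exact congrArg List.sum (List.map_congr_left h)

theorem sum_shuffles_pow_invRev (q : R) : ∀ {x y : List ℕ}, (∀ a ∈ x, ∀ b ∈ y, a < b) →
    ((shuffles x y).map fun u => q ^ invRev u).sum =
      q ^ (invRev x + invRev y) * gaussBinom q x.length y.length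
  | [], y, _ => by simp [shuffles, invRev, gaussBinom_zero_left]
  | a :: x, [], _ => by simp [shuffles, invRev, gaussBinom_zero_right]
  | a :: x, b :: y, h => by
    have hx : ∀ u ∈ shuffles x (b :: y),
        q ^ invRev (a :: u) =
          q ^ (x.countP (fun c => a < c) + (y.length + 1)) * q ^ invRev u := by
      intro u hu
      have e : (b :: y).countP (fun c => a < c) = y.length + 1 := by
        rw [← List.length_cons (a := b), List.countP_eq_length]
        exact fun c hc => by simpa using h a (by simp) c hc
      rw [invRev, (perm_of_mem_shuffles hu).countP_eq, List.countP_append, e, pow_add]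
    have hy : ∀ u ∈ shuffles (a :: x) y,
        q ^ invRev (b :: u) = q ^ (y.countP (fun c => b < c)) * q ^ invRev u := by
      intro u hu
      have e : (a :: x).countP (fun c => b < c) = 0 := by
        rw [List.countP_eq_zero]
        exact fun c hc => by simpa using (h c hc b (by simp)).le
      rw [invRev, (perm_of_mem_shuffles hu).countP_eq, List.countP_append, e, zero_add, pow_add]
    rw [sum_shuffles_cons_cons, sum_map_congr_mul _ hx, sum_map_congr_mul _ hy,
      sum_shuffles_pow_invRev q (fun c hc => h c (by simp [hc])),
      sum_shuffles_pow_invRev q (fun c hc d hd => h c hc d (by simp [hd]))]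
    simp only [List.length_cons, gaussBinom_succ_succ', invRev]
    ring
termination_by x y => x.length + y.length

theorem majRev_cons_of_head?_le (k : ℕ → ℕ) {a : ℕ} {x : List ℕ}
    (h : ∀ b ∈ x.head?, k b ≤ k a) : majRev k (a :: x) = majRev k x := by
  cases x with
  | nil => simp [majRev]
  | cons b x =>
    have : ¬ k a < k b := (h b (by simp)).not_gt
    simp [majRev, this]

theorem majRev_cons_of_lt_head? (k : ℕ → ℕ) {a : ℕ} {x : List ℕ}
    (h : ∀ b ∈ x.head?, k a < k b) : majRev k (a :: x) = x.length + majRev k x := by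
  cases x with
  | nil => simp [majRev]
  | cons b x => simp [majRev, h b (by simp)]

/-- Shuffles of `x` and `y` preceded by a letter `a`, when the letters of `x` are smaller than
those of `y`: the case `a < y₁` and the case where `a` exceeds the letters of `x`. -/
theorem sum_shuffles_pow_majRev_cons (q : R) (k : ℕ → ℕ) : ∀ {x y : List ℕ} (a : ℕ),
    (∀ b ∈ x, ∀ c ∈ y, k b < k c) →
    ((∀ c ∈ y.head?, k a < k c) →
      ((shuffles x y).map fun u => q ^ majRev k (a :: u)).sum =
        q ^ (majRev k (a :: x) + majRev k y + y.length) * gaussBinom q x.length y.length) ∧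
    ((∀ b ∈ x, k b < k a) →
      ((shuffles x y).map fun u => q ^ majRev k (a :: u)).sum =
        q ^ (majRev k x + majRev k (a :: y)) * gaussBinom q x.length y.length)
  | [], y, a, _ => by
    refine ⟨fun h => ?_, fun _ => by simp [shuffles, majRev, gaussBinom_zero_left]⟩
    simp [shuffles, majRev, gaussBinom_zero_left, majRev_cons_of_lt_head? k h, add_comm]
  | b :: x, [], a, _ => by
    refine ⟨fun _ => by simp [shuffles, majRev, gaussBinom_zero_right], fun h => ?_⟩
    rw [shuffles_nil_right, List.map_singleton, List.sum_singleton,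
      majRev_cons_of_head?_le k (x := b :: x) (by simpa using (h b (by simp)).le)]
    simp [majRev, gaussBinom_zero_right]
  | b :: x, c :: y, a, hxy => by
    have hx : ∀ u ∈ shuffles x (c :: y), q ^ majRev k (a :: b :: u) =
        q ^ (if k a < k b then x.length + y.length + 2 else 0) * q ^ majRev k (b :: u) := by
      intro u hu
      rw [majRev, pow_add, length_of_mem_shuffles hu, List.length_cons]
      rfl
    have hy : ∀ u ∈ shuffles (b :: x) y, q ^ majRev k (a :: c :: u) =
        q ^ (if k a < k c then x.length + y.length + 2 else 0) * q ^ majRev k (c :: u) := by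
      intro u hu
      rw [majRev, pow_add, length_of_mem_shuffles hu, List.length_cons]
      congr 3
      ring
    rw [sum_shuffles_cons_cons, sum_map_congr_mul _ hx, sum_map_congr_mul _ hy,
      (sum_shuffles_pow_majRev_cons q k b fun d hd => hxy d (by simp [hd])).1
        (by simpa using hxy b (by simp) c (by simp)),
      (sum_shuffles_pow_majRev_cons q k c
        fun d hd e he => hxy d hd e (by simp [he])).2 (fun d hd => hxy d hd c (by simp))]
    have h₁ := gaussBinom_succ_succ q x.length y.length
    have h₂ := gaussBinom_succ_succ' q x.length y.length
    constructor
    · intro hac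
      rw [if_pos (hac c (by simp)), majRev.eq_3 k a]
      simp only [List.length_cons]
      split_ifs
      · rw [h₂]; ring
      · rw [h₁]; ring
    · intro hba
      rw [if_neg (hba b (by simp)).not_gt, majRev.eq_3 k a c]
      simp only [List.length_cons]
      split_ifs
      · rw [h₁]; ring
      · rw [h₂]; ring
termination_by x y => x.length + y.length

end Shuffle

/-! ### Inverses of alternating permutations as reversed words -/

/-- No odd letter precedes a letter adjacent to it in value. -/
def IsAltRev (r : List ℕ) : Prop :=
  r.Pairwise fun a b => a % 2 = 1 → b ≠ a + 1 ∧ a ≠ b + 1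

/-- The reversals of the inverses of the alternating permutations of `{lo, …, lo + 2n}`. -/
def altWords (lo n : ℕ) : Finset (List ℕ) :=
  (List.range' lo (2 * n + 1)).permutations.toFinset.filter IsAltRev

theorem mem_altWords {lo n : ℕ} {r : List ℕ} :
    r ∈ altWords lo n ↔
      r.Nodup ∧ (∀ a, a ∈ r ↔ lo ≤ a ∧ a < lo + (2 * n + 1)) ∧ IsAltRev r := by
  have hr : (List.range' lo (2 * n + 1)).Nodup := List.nodup_range'
  rw [altWords, Finset.mem_filter, List.mem_toFinset, List.mem_permutations, ← and_assoc]
  refine and_congr_left fun _ => ⟨fun h => ⟨h.nodup_iff.2 hr, fun a => ?_⟩, fun h => ?_⟩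
  · rw [h.mem_iff, List.mem_range'_1]
  · rw [List.perm_ext_iff_of_nodup h.1 hr]
    intro a
    rw [h.2, List.mem_range'_1]

theorem length_of_mem_altWords {lo n : ℕ} {r : List ℕ} (h : r ∈ altWords lo n) :
    r.length = 2 * n + 1 := by
  rw [altWords, Finset.mem_filter, List.mem_toFinset, List.mem_permutations] at h
  simpa using h.1.length_eq

theorem altWords_zero (lo : ℕ) : altWords lo 0 = {[lo]} := by
  ext r
  simp [altWords, IsAltRev]
  rintro rfl
  simp

theorem exists_head_of_mem_altWords {lo n a : ℕ} {u : List ℕ} (hlo : lo % 2 = 1)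
    (h : a :: u ∈ altWords lo (n + 1)) : ∃ k ≤ n, a = lo + 2 * k + 1 := by
  obtain ⟨-, hm, hp⟩ := mem_altWords.1 h
  have ha := (hm a).1 (by simp)
  have hu := (List.pairwise_cons.1 hp).1
  have hodd : a % 2 ≠ 1 := by
    intro hodd
    rcases Nat.lt_or_ge (a + 1) (lo + (2 * (n + 1) + 1)) with hlt | hge
    · have : a + 1 ∈ u := by
        have := (hm (a + 1)).2 ⟨by omega, hlt⟩
        simpa using this
      exact (hu _ this hodd).1 rfl
    · have : a - 1 ∈ u := by
        have := (hm (a - 1)).2 ⟨by omega, by omega⟩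
        rw [List.mem_cons] at this
        exact this.resolve_left (by omega)
      exact (hu _ this hodd).2 (by omega)
  exact ⟨(a - lo) / 2, by omega, by omega⟩

theorem pairwise_of_pairwise_filter {α : Type*} {P : α → α → Prop} (p : α → Bool) {u : List α}
    (h₁ : (u.filter p).Pairwise P) (h₂ : (u.filter fun a => !p a).Pairwise P)
    (h : ∀ a ∈ u, ∀ b ∈ u, p a ≠ p b → P a b) : u.Pairwise P := by
  rw [List.pairwise_filter] at h₁ h₂
  refine (h₁.and h₂).imp_of_mem fun {a b} ha hb hab => ?_
  by_cases hp : p a = p b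
  · cases hb' : p b <;> simp_all
  · exact h a ha b hb hp

theorem cons_mem_altWords_iff {lo n k : ℕ} {u : List ℕ} (hlo : lo % 2 = 1) (hk : k ≤ n) :
    (lo + 2 * k + 1) :: u ∈ altWords lo (n + 1) ↔
      u.filter (fun a => decide (a < lo + 2 * k + 1)) ∈ altWords lo k ∧
        u.filter (fun a => !decide (a < lo + 2 * k + 1)) ∈
          altWords (lo + 2 * k + 2) (n - k) := by
  set c := lo + 2 * k + 1 with hc
  simp only [mem_altWords]
  constructor
  · rintro ⟨hn, hm, hp⟩
    obtain ⟨hcu, hn⟩ := List.nodup_cons.1 hn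
    have hp := (List.pairwise_cons.1 hp).2
    have hu : ∀ a, a ∈ u ↔ a ≠ c ∧ lo ≤ a ∧ a < lo + (2 * (n + 1) + 1) := by
      intro a
      rw [← hm, List.mem_cons]
      constructor
      · exact fun h => ⟨fun e => hcu (e ▸ h), Or.inr h⟩
      · exact fun h => h.2.resolve_left h.1
    refine ⟨⟨hn.filter _, fun a => ?_, hp.filter _⟩, ⟨hn.filter _, fun a => ?_, hp.filter _⟩⟩
    · rw [List.mem_filter, hu, decide_eq_true_eq]
      omega
    · rw [List.mem_filter, hu, Bool.not_eq_true', decide_eq_false_iff_not]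
      omega
  · rintro ⟨⟨hn₁, hm₁, hp₁⟩, ⟨hn₂, hm₂, hp₂⟩⟩
    simp only [List.mem_filter, decide_eq_true_eq, Bool.not_eq_true',
      decide_eq_false_iff_not] at hm₁ hm₂
    have hn : u.Nodup := pairwise_of_pairwise_filter _ hn₁ hn₂ fun a _ b _ hab e => hab (by rw [e])
    have hu : ∀ a, a ∈ u ↔ a ≠ c ∧ lo ≤ a ∧ a < lo + (2 * (n + 1) + 1) := by
      intro a
      have h₁ := hm₁ a
      have h₂ := hm₂ a
      by_cases ha : a < c
      · simp only [ha, and_true] at h₁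
        rw [h₁]
        omega
      · simp only [ha, not_false_eq_true, and_true] at h₂
        rw [h₂]
        omega
    refine ⟨List.nodup_cons.2 ⟨fun h => ((hu c).1 h).1 rfl, hn⟩, fun a => ?_,
      List.pairwise_cons.2 ⟨fun b _ h => by omega, ?_⟩⟩
    · rw [List.mem_cons, hu]
      omega
    · refine pairwise_of_pairwise_filter _ hp₁ hp₂ fun a ha b hb hab _ => ?_
      have ha := ((hu a).1 ha).1
      have hb := ((hu b).1 hb).1
      have hab : ¬ (a < c ↔ b < c) := fun e => hab (by simp [e])
      omega

theorem mem_shuffles_altWords_iff {lo k m : ℕ} {x y u : List ℕ} (hx : x ∈ altWords lo k)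
    (hy : y ∈ altWords (lo + 2 * k + 2) m) :
    u ∈ shuffles x y ↔ u.filter (fun a => decide (a < lo + 2 * k + 1)) = x ∧
      u.filter (fun a => !decide (a < lo + 2 * k + 1)) = y := by
  have hmx := (mem_altWords.1 hx).2.1
  have hmy := (mem_altWords.1 hy).2.1
  refine mem_shuffles_iff _ (fun a ha => ?_) (fun a ha => ?_)
  · have := (hmx a).1 ha
    rw [decide_eq_true_eq]
    omega
  · have := (hmy a).1 ha
    rw [decide_eq_false_iff_not]
    omega

theorem nodup_shuffles_altWords {lo k m : ℕ} {x y : List ℕ} (hx : x ∈ altWords lo k)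
    (hy : y ∈ altWords (lo + 2 * k + 2) m) : (shuffles x y).Nodup := by
  refine nodup_shuffles fun a ha hb => ?_
  have h₁ := ((mem_altWords.1 hx).2.1 a).1 ha
  have h₂ := ((mem_altWords.1 hy).2.1 a).1 hb
  omega

theorem sum_altWords_succ {M : Type*} [AddCommMonoid M] (f : List ℕ → M) {lo : ℕ} (n : ℕ)
    (hlo : lo % 2 = 1) :
    ∑ r ∈ altWords lo (n + 1), f r =
      ∑ k ∈ range (n + 1), ∑ x ∈ altWords lo k, ∑ y ∈ altWords (lo + 2 * k + 2) (n - k),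
        ((shuffles x y).map fun u => f ((lo + 2 * k + 1) :: u)).sum := by
  have key : ∀ k ∈ range (n + 1),
      ∑ x ∈ altWords lo k, ∑ y ∈ altWords (lo + 2 * k + 2) (n - k),
        ((shuffles x y).map fun u => f ((lo + 2 * k + 1) :: u)).sum =
      ∑ p ∈ (altWords lo k ×ˢ altWords (lo + 2 * k + 2) (n - k)).sigma
        (fun p => (shuffles p.1 p.2).toFinset), f ((lo + 2 * k + 1) :: p.2) := by
    intro k _
    rw [Finset.sum_sigma, Finset.sum_product]
    refine Finset.sum_congr rfl fun x hx => Finset.sum_congr rfl fun y hy => ?_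
    exact (List.sum_toFinset _ (nodup_shuffles_altWords hx hy)).symm
  rw [Finset.sum_congr rfl key, Finset.sum_sigma']
  symm
  refine Finset.sum_bij (fun s _ => (lo + 2 * s.1 + 1) :: s.2.2) ?_ ?_ ?_ (fun _ _ => rfl)
  · rintro ⟨k, ⟨x, y⟩, u⟩ h
    simp only [Finset.mem_sigma, Finset.mem_range, Finset.mem_product, List.mem_toFinset] at h
    obtain ⟨hk, ⟨hx, hy⟩, hu⟩ := h
    obtain ⟨rfl, rfl⟩ := (mem_shuffles_altWords_iff hx hy).1 hu
    exact (cons_mem_altWords_iff hlo (Nat.le_of_lt_succ hk)).2 ⟨hx, hy⟩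
  · rintro ⟨k, ⟨x, y⟩, u⟩ h ⟨k', ⟨x', y'⟩, u'⟩ h' e
    simp only [Finset.mem_sigma, Finset.mem_range, Finset.mem_product, List.mem_toFinset] at h h'
    simp only [List.cons.injEq] at e
    obtain ⟨e, rfl⟩ := e
    obtain rfl : k = k' := by omega
    obtain ⟨rfl, rfl⟩ := (mem_shuffles_altWords_iff h.2.1.1 h.2.1.2).1 h.2.2
    obtain ⟨rfl, rfl⟩ := (mem_shuffles_altWords_iff h'.2.1.1 h'.2.1.2).1 h'.2.2
    rfl
  · intro r hr
    cases r with
    | nil => simpa using length_of_mem_altWords hr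
    | cons a u =>
      obtain ⟨k, hk, rfl⟩ := exists_head_of_mem_altWords hlo hr
      obtain ⟨hx, hy⟩ := (cons_mem_altWords_iff hlo hk).1 hr
      refine ⟨⟨k, ⟨u.filter fun a => decide (a < lo + 2 * k + 1),
        u.filter fun a => !decide (a < lo + 2 * k + 1)⟩, u⟩, ?_, rfl⟩
      simp only [Finset.mem_sigma, Finset.mem_range, Finset.mem_product, List.mem_toFinset]
      exact ⟨Nat.lt_succ_of_le hk, ⟨hx, hy⟩, (mem_shuffles_altWords_iff hx hy).2 ⟨rfl, rfl⟩⟩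

/-! ### The two statistics satisfy the same recurrence -/

/-- The letter `j` relabelled by the infinite product `⋯(0,1)(2,3)(4,5)⋯`. -/
def kappaKey (j : ℕ) : ℕ := if j % 2 = 0 then j + 1 else j - 1

theorem sum_shuffles_altWords_pow_majRev {R : Type*} [CommRing R] (q : R) {lo k m : ℕ}
    {x y : List ℕ} (hlo : lo % 2 = 1) (hx : x ∈ altWords lo k)
    (hy : y ∈ altWords (lo + 2 * k + 2) m) :
    ((shuffles x y).map fun u => q ^ majRev kappaKey ((lo + 2 * k + 1) :: u)).sum =
      q ^ (if m = 0 then 0 else 2 * m + 1) * gaussBinom q (2 * k + 1) (2 * m + 1) *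
        (q ^ majRev kappaKey x * q ^ majRev kappaKey y) := by
  have hmx := (mem_altWords.1 hx).2.1
  have hmy := (mem_altWords.1 hy).2.1
  have hxy : ∀ a ∈ x, ∀ b ∈ y, kappaKey a < kappaKey b := by
    intro a ha b hb
    have := (hmx a).1 ha
    have := (hmy b).1 hb
    unfold kappaKey
    split_ifs <;> omega
  have hxc : ∀ a ∈ x, kappaKey a < kappaKey (lo + 2 * k + 1) := by
    intro a ha
    have := (hmx a).1 ha
    unfold kappaKey
    split_ifs <;> omega
  obtain ⟨hS, hB⟩ := sum_shuffles_pow_majRev_cons q kappaKey (lo + 2 * k + 1) hxy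
  rw [length_of_mem_altWords hx, length_of_mem_altWords hy] at hS hB
  rcases m with _ | m
  · rw [hB hxc]
    rw [altWords_zero, Finset.mem_singleton] at hy
    subst hy
    have : ¬ kappaKey (lo + 2 * k + 1) < kappaKey (lo + 2 * k + 2) := by
      unfold kappaKey
      split_ifs <;> omega
    rw [majRev_cons_of_head?_le kappaKey (x := [_]) (by simpa using this)]
    simp [majRev, mul_comm]
  · rw [hS, majRev_cons_of_head?_le kappaKey fun b hb => (hxc b (List.mem_of_mem_head? hb)).le]
    · rw [if_neg (Nat.succ_ne_zero m)]
      ring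
    · intro b hb
      cases y with
      | nil => simp at hb
      | cons b' y =>
        obtain ⟨j, -, rfl⟩ := exists_head_of_mem_altWords (by omega) hy
        simp only [List.head?_cons, Option.mem_some_iff] at hb
        subst hb
        unfold kappaKey
        split_ifs <;> omega

theorem evenAscRev_of_mem_shuffles : ∀ {x y u : List ℕ},
    (∀ a ∈ x, ∀ b ∈ y, a % 2 = 0 → a + 2 ≠ b ∧ b + 2 ≠ a) → u ∈ shuffles x y →
    evenAscRev u = evenAscRev x + evenAscRev y
  | [], y, u, _, h => by
    simp only [shuffles, List.mem_singleton] at h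
    simp [h, evenAscRev]
  | a :: x, [], u, _, h => by
    simp only [shuffles, List.mem_singleton] at h
    simp [h, evenAscRev]
  | a :: x, b :: y, u, hxy, h => by
    simp only [shuffles, List.mem_append, List.mem_map] at h
    rcases h with ⟨v, hv, rfl⟩ | ⟨v, hv, rfl⟩
    · have e : (a % 2 = 0 ∧ ∃ c ∈ v, c + 2 = a) ↔ (a % 2 = 0 ∧ ∃ c ∈ x, c + 2 = a) := by
        refine and_congr_right fun ha => ⟨?_, ?_⟩
        · rintro ⟨c, hc, hca⟩
          rw [(perm_of_mem_shuffles hv).mem_iff, List.mem_append] at hc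
          exact ⟨c, hc.resolve_right fun hc => (hxy a (by simp) c hc ha).2 hca, hca⟩
        · rintro ⟨c, hc, hca⟩
          exact ⟨c, by simp [(perm_of_mem_shuffles hv).mem_iff, hc], hca⟩
      rw [evenAscRev, evenAscRev.eq_2 a x,
        evenAscRev_of_mem_shuffles (fun c hc => hxy c (by simp [hc])) hv, add_assoc]
      simp only [e]
    · have e : (b % 2 = 0 ∧ ∃ c ∈ v, c + 2 = b) ↔ (b % 2 = 0 ∧ ∃ c ∈ y, c + 2 = b) := by
        refine and_congr_right fun hb => ⟨?_, ?_⟩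
        · rintro ⟨c, hc, hcb⟩
          rw [(perm_of_mem_shuffles hv).mem_iff, List.mem_append] at hc
          exact ⟨c, hc.resolve_left fun hc => (hxy c hc b (by simp) (by omega)).1 hcb, hcb⟩
        · rintro ⟨c, hc, hcb⟩
          exact ⟨c, by simp [(perm_of_mem_shuffles hv).mem_iff, hc], hcb⟩
      rw [evenAscRev, evenAscRev.eq_2 b y, evenAscRev_of_mem_shuffles
        (fun c hc d hd => hxy c hc d (by simp [hd])) hv, add_left_comm]
      simp only [e]
termination_by x y => x.length + y.length

/-- The statistic `inv - ndes` of the even-letter subword, on reversed words. -/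
def invNdesRev (r : List ℕ) : ℤ :=
  invRev r - (evenAscRev r + if 1 < r.length then 1 else 0 : ℕ)

theorem invNdesRev_cons_of_mem_shuffles {lo k m : ℕ} {x y u : List ℕ} (hlo : lo % 2 = 1)
    (hx : x ∈ altWords lo k) (hy : y ∈ altWords (lo + 2 * k + 2) m) (hu : u ∈ shuffles x y) :
    invNdesRev ((lo + 2 * k + 1) :: u) =
      (if m = 0 then 0 else 2 * m + 1 : ℕ) + invNdesRev x + invNdesRev y +
        (invRev u - invRev x - invRev y) := by
  have hmx := (mem_altWords.1 hx).2.1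
  have hmy := (mem_altWords.1 hy).2.1
  have hp := perm_of_mem_shuffles hu
  have he := evenAscRev_of_mem_shuffles (fun a ha b hb h => by
    have := (hmx a).1 ha
    have := (hmy b).1 hb
    omega) hu
  have hinv : invRev ((lo + 2 * k + 1) :: u) = 2 * m + 1 + invRev u := by
    have e₁ : x.countP (fun b => lo + 2 * k + 1 < b) = 0 := by
      rw [List.countP_eq_zero]
      intro b hb
      have := (hmx b).1 hb
      simp only [decide_eq_true_eq]
      omega
    have e₂ : y.countP (fun b => lo + 2 * k + 1 < b) = 2 * m + 1 := by
      rw [← length_of_mem_altWords hy, List.countP_eq_length]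
      intro b hb
      have := (hmy b).1 hb
      simp only [decide_eq_true_eq]
      omega
    rw [invRev, hp.countP_eq, List.countP_append, e₁, e₂, zero_add]
  have heven : evenAscRev ((lo + 2 * k + 1) :: u) =
      (if k = 0 then 0 else 1) + evenAscRev u := by
    rw [evenAscRev]
    congr 1
    rcases Nat.eq_zero_or_pos k with hk | hk
    · rw [if_pos hk, if_neg]
      rintro ⟨-, b, hb, hbc⟩
      rw [hp.mem_iff, List.mem_append, hmx, hmy] at hb
      omega
    · rw [if_neg hk.ne', if_pos]
      refine ⟨by omega, lo + 2 * k - 1, ?_, by omega⟩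
      rw [hp.mem_iff, List.mem_append, hmx]
      omega
  have hlen := length_of_mem_shuffles hu
  rw [length_of_mem_altWords hx, length_of_mem_altWords hy] at hlen
  simp only [invNdesRev, hinv, heven, he, List.length_cons, hlen, length_of_mem_altWords hx,
    length_of_mem_altWords hy]
  push_cast
  split_ifs <;> omega

open LaurentPolynomial in
theorem sum_shuffles_altWords_invNdesRev {lo k m : ℕ} {x y : List ℕ} (hlo : lo % 2 = 1)
    (hx : x ∈ altWords lo k) (hy : y ∈ altWords (lo + 2 * k + 2) m) :
    ((shuffles x y).map fun u =>
        (T (invNdesRev ((lo + 2 * k + 1) :: u)) : LaurentPolynomial ℤ)).sum =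
      T 1 ^ (if m = 0 then 0 else 2 * m + 1) * gaussBinom (T 1) (2 * k + 1) (2 * m + 1) *
        (T (invNdesRev x) * T (invNdesRev y)) := by
  have hlt : ∀ a ∈ x, ∀ b ∈ y, a < b := by
    intro a ha b hb
    have := ((mem_altWords.1 hx).2.1 a).1 ha
    have := ((mem_altWords.1 hy).2.1 b).1 hb
    omega
  have h : ∀ u ∈ shuffles x y, (T (invNdesRev ((lo + 2 * k + 1) :: u)) : LaurentPolynomial ℤ) =
      T ((if m = 0 then 0 else 2 * m + 1 : ℕ) + invNdesRev x + invNdesRev y +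
        (-invRev x - invRev y)) * T 1 ^ invRev u := by
    intro u hu
    rw [invNdesRev_cons_of_mem_shuffles hlo hx hy hu, T_pow, ← T_add]
    congr 1
    ring
  rw [sum_map_congr_mul _ h, sum_shuffles_pow_invRev _ hlt, length_of_mem_altWords hx,
    length_of_mem_altWords hy, ← mul_assoc, mul_right_comm _ (gaussBinom _ _ _)]
  congr 1
  simp only [T_pow, ← T_add]
  congr 1
  push_cast
  ring

open LaurentPolynomial in
theorem sum_altWords_majRev_eq_invNdesRev : ∀ (n : ℕ) {lo : ℕ}, lo % 2 = 1 →
    ∑ r ∈ altWords lo n, (T 1 ^ majRev kappaKey r : LaurentPolynomial ℤ) =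
      ∑ r ∈ altWords lo n, T (invNdesRev r)
  | 0, lo, _ => by
    simp [altWords_zero, majRev, invNdesRev, invRev, evenAscRev]
  | n + 1, lo, hlo => by
    rw [sum_altWords_succ _ n hlo, sum_altWords_succ _ n hlo]
    refine Finset.sum_congr rfl fun k hk => ?_
    have hk : k < n + 1 := Finset.mem_range.1 hk
    rw [Finset.sum_congr rfl fun x hx => Finset.sum_congr rfl fun y hy =>
        sum_shuffles_altWords_pow_majRev (T 1 : LaurentPolynomial ℤ) hlo hx hy,
      Finset.sum_congr rfl fun x hx => Finset.sum_congr rfl fun y hy =>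
        sum_shuffles_altWords_invNdesRev hlo hx hy]
    simp only [← Finset.mul_sum, ← Finset.sum_mul]
    rw [sum_altWords_majRev_eq_invNdesRev k hlo,
      sum_altWords_majRev_eq_invNdesRev (n - k) (lo := lo + 2 * k + 2) (by omega)]
termination_by n => n
decreasing_by all_goals omega

/-! ### From permutations to reversed words -/

/-- The reversed word `w_m ⋯ w_1`. -/
def revWord (w : ℕ → ℕ) : ℕ → List ℕ
  | 0 => []
  | m + 1 => w (m + 1) :: revWord w m

theorem length_revWord (w : ℕ → ℕ) (m : ℕ) : (revWord w m).length = m := by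
  induction m with
  | zero => rfl
  | succ m ih => rw [revWord, List.length_cons, ih]

theorem mem_revWord {w : ℕ → ℕ} {m a : ℕ} :
    a ∈ revWord w m ↔ ∃ i, 1 ≤ i ∧ i ≤ m ∧ w i = a := by
  induction m with
  | zero =>
    simp only [revWord, List.not_mem_nil, false_iff]
    rintro ⟨i, h₁, h₂, -⟩
    omega
  | succ m ih =>
    rw [revWord, List.mem_cons, ih]
    constructor
    · rintro (rfl | ⟨i, h₁, h₂, rfl⟩)
      · exact ⟨m + 1, by omega, le_rfl, rfl⟩
      · exact ⟨i, h₁, by omega, rfl⟩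
    · rintro ⟨i, h₁, h₂, rfl⟩
      rcases h₂.eq_or_lt with rfl | h₂
      · exact Or.inl rfl
      · exact Or.inr ⟨i, h₁, by omega, rfl⟩

theorem pairwise_revWord {P : ℕ → ℕ → Prop} {w : ℕ → ℕ} {m : ℕ} :
    (revWord w m).Pairwise P ↔ ∀ i j, 1 ≤ i → i < j → j ≤ m → P (w j) (w i) := by
  induction m with
  | zero =>
    simp only [revWord, List.Pairwise.nil, true_iff]
    intros
    omega
  | succ m ih =>
    rw [revWord, List.pairwise_cons, ih]
    constructor
    · rintro ⟨h₁, h₂⟩ i j hi hij hj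
      rcases hj.eq_or_lt with rfl | hj
      · exact h₁ _ (mem_revWord.2 ⟨i, hi, by omega, rfl⟩)
      · exact h₂ i j hi hij (by omega)
    · refine fun h => ⟨fun a ha => ?_, fun i j hi hij hj => h i j hi hij (by omega)⟩
      obtain ⟨i, h₁, h₂, rfl⟩ := mem_revWord.1 ha
      exact h i (m + 1) h₁ (by omega) le_rfl

theorem revWord_eq_iff {w v : ℕ → ℕ} {m : ℕ} :
    revWord w m = revWord v m ↔ ∀ i, 1 ≤ i → i ≤ m → w i = v i := by
  induction m with
  | zero =>
    simp only [revWord, true_iff]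
    intros
    omega
  | succ m ih =>
    rw [revWord, revWord, List.cons.injEq, ih]
    constructor
    · rintro ⟨h₁, h₂⟩ i hi him
      rcases him.eq_or_lt with rfl | him
      · exact h₁
      · exact h₂ i hi (by omega)
    · exact fun h => ⟨h _ (by omega) le_rfl, fun i hi him => h i hi (by omega)⟩

theorem exists_revWord_eq (r : List ℕ) : ∃ w, revWord w r.length = r := by
  induction r with
  | nil => exact ⟨id, rfl⟩
  | cons a t ih =>
    obtain ⟨w, hw⟩ := ih
    refine ⟨Function.update w (t.length + 1) a, ?_⟩
    rw [List.length_cons, revWord, Function.update_self]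
    congr 1
    refine Eq.trans (revWord_eq_iff.2 fun i _ hi => ?_) hw
    exact Function.update_of_ne (by omega) _ _

theorem majRev_revWord (k w v : ℕ → ℕ) : ∀ (m : ℕ),
    (∀ i j, 1 ≤ i → i ≤ m → 1 ≤ j → j ≤ m → (k (w i) < k (w j) ↔ v i < v j)) →
    majRev k (revWord w m) = majW m v
  | 0, _ => by simp [revWord, majRev, majW]
  | 1, _ => by simp [revWord, majRev, majW]
  | m + 2, h => by
    have ih := majRev_revWord k w v (m + 1) fun i j h₁ h₂ h₃ h₄ =>
      h i j h₁ (by omega) h₃ (by omega)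
    have e := h (m + 2) (m + 1) (by omega) le_rfl (by omega) (by omega)
    rw [revWord] at ih
    rw [revWord, revWord, majRev, ih, majW, majW, length_revWord]
    simp only [e]
    rw [show m + 2 - 1 = m + 1 from rfl, Finset.sum_Icc_succ_top (by omega), add_comm]
    rfl

theorem countP_revWord (p : ℕ → Prop) [DecidablePred p] (w : ℕ → ℕ) (m : ℕ) :
    (revWord w m).countP (fun a => p a) = ∑ i ∈ Finset.Icc 1 m, if p (w i) then 1 else 0 := by
  induction m with
  | zero => simp [revWord]
  | succ m ih =>
    rw [revWord, List.countP_cons, ih, Finset.sum_Icc_succ_top (by omega)]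
    simp

theorem invW_eq_sum (m : ℕ) (w : ℕ → ℕ) :
    invW m w = ∑ i ∈ Finset.Icc 1 m, ∑ j ∈ Finset.Icc 1 m,
      if i < j ∧ w j < w i then 1 else 0 := by
  rw [invW, Finset.card_filter, Finset.sum_product]

theorem invRev_revWord (w : ℕ → ℕ) (m : ℕ) : invRev (revWord w m) = invW m w := by
  induction m with
  | zero => simp [revWord, invRev, invW]
  | succ m ih =>
    have h₁ : ∑ j ∈ Finset.Icc 1 (m + 1),
        (if m + 1 < j ∧ w j < w (m + 1) then 1 else 0) = 0 :=
      Finset.sum_eq_zero fun j hj => if_neg fun h => by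
        have := (Finset.mem_Icc.1 hj).2
        omega
    have h₂ : ∀ i ∈ Finset.Icc 1 m, (if i < m + 1 ∧ w (m + 1) < w i then 1 else 0) =
        if w (m + 1) < w i then 1 else 0 := by
      intro i hi
      have := (Finset.mem_Icc.1 hi).2
      simp only [show i < m + 1 by omega, true_and]
    rw [revWord, invRev, ih, countP_revWord (fun a => w (m + 1) < a), invW_eq_sum (m + 1),
      Finset.sum_Icc_succ_top (by omega), h₁, add_zero,
      Finset.sum_congr rfl fun i _ => Finset.sum_Icc_succ_top (by omega) _,
      Finset.sum_add_distrib, Finset.sum_congr rfl h₂, ← invW_eq_sum, add_comm]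

theorem evenAscRev_revWord (w : ℕ → ℕ) (m : ℕ) :
    evenAscRev (revWord w m) =
      ((Finset.Icc 1 m).filter fun i => w i % 2 = 0 ∧ ∃ j, 1 ≤ j ∧ j < i ∧ w j + 2 = w i).card := by
  induction m with
  | zero => simp [revWord, evenAscRev]
  | succ m ih =>
    have e : (∃ b ∈ revWord w m, b + 2 = w (m + 1)) ↔
        ∃ j, 1 ≤ j ∧ j < m + 1 ∧ w j + 2 = w (m + 1) := by
      simp only [mem_revWord]
      constructor
      · rintro ⟨_, ⟨j, h₁, h₂, rfl⟩, h₃⟩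
        exact ⟨j, h₁, by omega, h₃⟩
      · rintro ⟨j, h₁, h₂, h₃⟩
        exact ⟨_, ⟨j, h₁, by omega, rfl⟩, h₃⟩
    rw [revWord, evenAscRev, ih, Finset.card_filter, Finset.card_filter,
      Finset.sum_Icc_succ_top (by omega), add_comm]
    simp only [e]

section Word

variable {N : ℕ} (π : Equiv.Perm (Fin N))

theorem word_mem {i : ℕ} (h : 1 ≤ i ∧ i ≤ N) : 1 ≤ word π i ∧ word π i ≤ N := by
  rw [word, dif_pos h]
  have := (π ⟨i - 1, by omega⟩).isLt
  omega

theorem word_symm_word {i : ℕ} (h : 1 ≤ i ∧ i ≤ N) : word π.symm (word π i) = i := by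
  have h' := word_mem π h
  rw [word, dif_pos h']
  have : (⟨word π i - 1, by omega⟩ : Fin N) = π ⟨i - 1, by omega⟩ := by
    ext
    simp [word, h]
  rw [this, Equiv.symm_apply_apply]
  simp only
  omega

theorem word_word_symm {i : ℕ} (h : 1 ≤ i ∧ i ≤ N) : word π (word π.symm i) = i :=
  word_symm_word π.symm h

theorem invW_word_symm : invW N (word π.symm) = invW N (word π) := by
  refine Finset.card_nbij' (fun p => (word π.symm p.2, word π.symm p.1))
    (fun p => (word π p.2, word π p.1)) ?_ ?_ ?_ ?_
  · rintro ⟨i, j⟩ h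
    simp only [Finset.coe_filter, Finset.mem_product, Finset.mem_Icc, Set.mem_ofPred_eq] at h ⊢
    obtain ⟨⟨hi, hj⟩, hij, hw⟩ := h
    rw [word_word_symm π hi, word_word_symm π hj]
    exact ⟨⟨word_mem _ hj, word_mem _ hi⟩, hw, hij⟩
  · rintro ⟨i, j⟩ h
    simp only [Finset.coe_filter, Finset.mem_product, Finset.mem_Icc, Set.mem_ofPred_eq] at h ⊢
    obtain ⟨⟨hi, hj⟩, hij, hw⟩ := h
    rw [word_symm_word π hi, word_symm_word π hj]
    exact ⟨⟨word_mem _ hj, word_mem _ hi⟩, hw, hij⟩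
  · rintro ⟨i, j⟩ h
    simp only [Finset.coe_filter, Finset.mem_product, Finset.mem_Icc, Set.mem_ofPred_eq] at h
    simp only
    rw [word_word_symm π h.1.1, word_word_symm π h.1.2]
  · rintro ⟨i, j⟩ h
    simp only [Finset.coe_filter, Finset.mem_product, Finset.mem_Icc, Set.mem_ofPred_eq] at h
    simp only
    rw [word_symm_word π h.1.1, word_symm_word π h.1.2]

theorem isAltRev_revWord_iff : IsAltRev (revWord (word π.symm) N) ↔ IsAltW N (word π) := by
  rw [IsAltRev, pairwise_revWord]
  constructor
  · intro h i hi
    rw [Finset.mem_Icc] at hi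
    have h₁ := word_mem π (i := i) (by omega)
    have h₂ := word_mem π (i := i + 1) (by omega)
    have e₁ := word_symm_word π (i := i) (by omega)
    have e₂ := word_symm_word π (i := i + 1) (by omega)
    have hne : word π i ≠ word π (i + 1) := fun e => by
      rw [e, e₂] at e₁
      omega
    constructor
    · intro hodd
      by_contra hlt
      have := h (word π (i + 1)) (word π i) h₂.1 (by omega) h₁.2
      rw [e₁, e₂] at this
      exact (this hodd).1 rfl
    · intro heven
      by_contra hlt
      have := h (word π i) (word π (i + 1)) h₁.1 (by omega) h₂.2
      rw [e₁, e₂] at this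
      exact (this (by omega)).2 rfl
  · intro h i j hi hij hj hodd
    have h₁ := word_mem π.symm (i := i) (by omega)
    have h₂ := word_mem π.symm (i := j) (by omega)
    have e₁ := word_word_symm π (i := i) (by omega)
    have e₂ := word_word_symm π (i := j) (by omega)
    constructor
    · intro e
      have := (h (word π.symm j) (Finset.mem_Icc.2 (by omega))).1 hodd
      rw [← e, e₁, e₂] at this
      omega
    · intro e
      have := (h (word π.symm i) (Finset.mem_Icc.2 (by omega))).2 (by omega)
      rw [← e, e₁, e₂] at this
      omega

end Word

theorem majRev_revWord_word_symm {n : ℕ} (π : Equiv.Perm (Fin (2 * n + 1))) :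
    majRev kappaKey (revWord (word π.symm) (2 * n + 1)) = majKappaInv (2 * n + 1) π := by
  refine majRev_revWord _ _ _ _ fun i j hi hi' hj hj' => ?_
  have h₁ := word_mem π.symm ⟨hi, hi'⟩
  have h₂ := word_mem π.symm ⟨hj, hj'⟩
  unfold kappaKey kappaNat
  split_ifs <;> omega

theorem evenAscRev_revWord_word_symm {m : ℕ} (π : Equiv.Perm (Fin (2 * (m + 1) + 1))) :
    evenAscRev (revWord (word π.symm) (2 * (m + 1) + 1)) + 1 = ndesW (m + 1) (evenWord π) := by
  have h : ndesW (m + 1) (evenWord π) =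
      ((Finset.Icc 1 m).filter fun j => word π (2 * j) < word π (2 * (j + 1))).card + 1 := by
    rw [ndesW, Finset.card_filter, Finset.card_filter, Finset.sum_Icc_succ_top (by omega),
      if_pos (Or.inl rfl)]
    congr 1
    refine Finset.sum_congr rfl fun j hj => ?_
    have := (Finset.mem_Icc.1 hj).2
    simp only [show j ≠ m + 1 by omega, false_or, evenWord]
  rw [h, evenAscRev_revWord]
  congr 1
  refine Finset.card_nbij' (fun i => word π.symm i / 2 - 1) (fun j => word π (2 * (j + 1)))
    ?_ ?_ ?_ ?_
  · intro i h
    simp only [Finset.coe_filter, Finset.mem_Icc, Set.mem_ofPred_eq] at h ⊢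
    obtain ⟨hi, heven, j, hj, hji, e⟩ := h
    have h₁ := word_mem π.symm hi
    have h₂ := word_mem π.symm (i := j) (by omega)
    rw [show 2 * (word π.symm i / 2 - 1) = word π.symm j by omega,
      show 2 * (word π.symm i / 2 - 1 + 1) = word π.symm i by omega, word_word_symm π hi,
      word_word_symm π (by omega)]
    omega
  · intro j h
    simp only [Finset.coe_filter, Finset.mem_Icc, Set.mem_ofPred_eq] at h ⊢
    rw [word_symm_word π (by omega)]
    refine ⟨word_mem π (by omega), by omega, word π (2 * j), ?_, h.2, ?_⟩
    · exact (word_mem π (by omega)).1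
    · rw [word_symm_word π (by omega)]
      omega
  · intro i h
    simp only [Finset.coe_filter, Finset.mem_Icc, Set.mem_ofPred_eq] at h
    obtain ⟨hi, heven, -⟩ := h
    have h₁ := word_mem π.symm hi
    simp only
    rw [show 2 * (word π.symm i / 2 - 1 + 1) = word π.symm i by omega, word_word_symm π hi]
  · intro j h
    simp only [Finset.coe_filter, Finset.mem_Icc, Set.mem_ofPred_eq] at h
    simp only
    rw [word_symm_word π (by omega)]
    omega

theorem invNdesRev_revWord_word_symm {n : ℕ} (π : Equiv.Perm (Fin (2 * n + 1))) :
    invNdesRev (revWord (word π.symm) (2 * n + 1)) =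
      (invW (2 * n + 1) (word π) : ℤ) - (ndesW n (evenWord π) : ℤ) := by
  rw [invNdesRev, invRev_revWord, invW_word_symm, length_revWord]
  congr 2
  rcases n with _ | m
  · simp [revWord, evenAscRev, ndesW]
  · rw [if_pos (by omega), evenAscRev_revWord_word_symm]

theorem revWord_word_symm_mem_altWords {n : ℕ} {π : Equiv.Perm (Fin (2 * n + 1))}
    (hπ : π ∈ altPerms (2 * n + 1)) :
    revWord (word π.symm) (2 * n + 1) ∈ altWords 1 n := by
  refine mem_altWords.2 ⟨pairwise_revWord.2 fun i j hi hij hj e => ?_, fun a => ?_,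
    (isAltRev_revWord_iff π).2 (Finset.mem_filter.1 hπ).2⟩
  · have := word_word_symm π (i := i) (by omega)
    rw [← e, word_word_symm π (by omega)] at this
    omega
  · rw [mem_revWord]
    constructor
    · rintro ⟨i, h₁, h₂, rfl⟩
      have := word_mem π.symm ⟨h₁, h₂⟩
      omega
    · intro h
      have h' := word_mem π (i := a) (by omega)
      exact ⟨word π a, h'.1, h'.2, word_symm_word π (by omega)⟩

theorem exists_revWord_word_symm_eq {n : ℕ} {r : List ℕ} (hr : r ∈ altWords 1 n) :
    ∃ π ∈ altPerms (2 * n + 1), revWord (word π.symm) (2 * n + 1) = r := by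
  obtain ⟨w, hw⟩ := exists_revWord_eq r
  rw [length_of_mem_altWords hr] at hw
  obtain ⟨hn, hm, hp⟩ := mem_altWords.1 hr
  rw [← hw] at hn hm hp
  have hmem : ∀ i : Fin (2 * n + 1), 1 ≤ w (i + 1) ∧ w (i + 1) ≤ 2 * n + 1 := by
    intro i
    have := (hm (w (i + 1))).1 (mem_revWord.2 ⟨i + 1, by omega, by omega, rfl⟩)
    omega
  let σ : Fin (2 * n + 1) → Fin (2 * n + 1) := fun i =>
    ⟨w (i + 1) - 1, by have := hmem i; omega⟩
  have hσ : Function.Injective σ := by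
    intro i j hij
    have h₁ := hmem i
    have h₂ := hmem j
    have e : w (i + 1) = w (j + 1) := by
      have := congrArg Fin.val hij
      simp only [σ] at this
      omega
    have hd := pairwise_revWord.1 hn
    rcases lt_trichotomy i j with h | h | h
    · exact absurd e.symm (hd (i + 1) (j + 1) (by omega) (by omega) (by omega))
    · exact h
    · exact absurd e (hd (j + 1) (i + 1) (by omega) (by omega) (by omega))
  let τ : Equiv.Perm (Fin (2 * n + 1)) :=
    Equiv.ofBijective σ (Finite.injective_iff_bijective.1 hσ)
  have hτ : revWord (word τ.symm.symm) (2 * n + 1) = revWord w (2 * n + 1) := by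
    refine revWord_eq_iff.2 fun i hi hi' => ?_
    have := hmem ⟨i - 1, by omega⟩
    simp only [Nat.sub_add_cancel hi] at this
    rw [word, dif_pos ⟨hi, hi'⟩]
    simp only [Equiv.symm_symm, τ, Equiv.ofBijective_apply, σ, Nat.sub_add_cancel hi]
    omega
  refine ⟨τ.symm, Finset.mem_filter.2 ⟨Finset.mem_univ _, ?_⟩, hτ.trans hw⟩
  rw [← isAltRev_revWord_iff, hτ]
  exact hp

theorem sum_altPerms_eq_sum_altWords {M : Type*} [AddCommMonoid M] (n : ℕ) (f : List ℕ → M) :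
    ∑ π ∈ altPerms (2 * n + 1), f (revWord (word π.symm) (2 * n + 1)) =
      ∑ r ∈ altWords 1 n, f r := by
  refine Finset.sum_bij (fun π _ => revWord (word π.symm) (2 * n + 1))
    (fun π hπ => revWord_word_symm_mem_altWords hπ) ?_
    (fun r hr => ?_) (fun _ _ => rfl)
  · intro π _ π' _ h
    rw [revWord_eq_iff] at h
    refine Equiv.symm_bijective.injective (Equiv.ext fun i => Fin.ext ?_)
    have := h (i + 1) (by omega) (by omega)
    simpa [word, Nat.le_of_lt_succ i.isLt] using this
  · obtain ⟨π, hπ, h⟩ := exists_revWord_word_symm_eq hr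
    exact ⟨π, hπ, h⟩

theorem statement_5 (n : ℕ) :
    (∑ π ∈ altPerms (2 * n + 1),
        (LaurentPolynomial.T (majKappaInv (2 * n + 1) π : ℤ) : LaurentPolynomial ℤ)) =
      ∑ π ∈ altPerms (2 * n + 1),
        (LaurentPolynomial.T
          ((invW (2 * n + 1) (word π) : ℤ) - (ndesW n (evenWord π) : ℤ)) :
            LaurentPolynomial ℤ) := by
  have h := sum_altWords_majRev_eq_invNdesRev n (lo := 1) rfl
  rw [← sum_altPerms_eq_sum_altWords, ← sum_altPerms_eq_sum_altWords] at h
  simpa only [majRev_revWord_word_symm, invNdesRev_revWord_word_symm, LaurentPolynomial.T_pow,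
    mul_one] using h

end Paper
end
end
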